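/- arXiv:1203.1158 — 2 statements merged into one kernel-verified Lean document; each statement's English description precedes it below -/
import Mathlib

section
/- For every haircomb T on n vertices, h(T) ≥ √n/2 − 1. (The paper states h(T) ≥ √n/2 with floors and ceilings omitted.) -/
open Finset

/-- The multiset of pairwise distances between distinct vertices of `S` in `G`
(one entry for each unordered pair of distinct vertices of `S`). -/
noncomputable def distMultiset {V : Type*} (G : SimpleGraph V) (S : Finset V) : Multiset ℕ :=
  letI := Classical.decEq V
  (S.sym2.filter fun p => ¬ p.IsDiag).val.map
    (Sym2.lift ⟨fun a b => G.dist a b, fun _ _ => SimpleGraph.dist_comm⟩)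

/-- Two disjoint vertex sets are homometric if their distance multisets coincide. -/
def Homometric {V : Type*} (G : SimpleGraph V) (S₁ S₂ : Finset V) : Prop :=
  Disjoint S₁ S₂ ∧ distMultiset G S₁ = distMultiset G S₂

/-- `h(G)`: the largest `h` such that `G` contains two disjoint homometric sets of
size `h` each. -/
noncomputable def homNumber {V : Type*} (G : SimpleGraph V) : ℕ :=
  sSup {h : ℕ | ∃ S₁ S₂ : Finset V, Homometric G S₁ S₂ ∧ S₁.card = h ∧ S₂.card = h}

/-- A haircomb: a tree containing a path (the spine) such that every vertex not on the
spine has degree at most `2`.  (Equivalently, a tree obtained from a spine path and a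
collection of vertex-disjoint paths (legs) by joining, for each leg, one of its
endpoints to a spine vertex by an edge: the components of `T` minus the spine are
exactly the legs, each is a path since all its vertex degrees are at most `2`, and in a
tree it is attached to the spine by exactly one edge, necessarily at an endpoint.) -/
def IsHaircomb {V : Type*} [Fintype V] (G : SimpleGraph V) [DecidableRel G.Adj] : Prop :=
  G.IsTree ∧ ∃ (a b : V) (p : G.Walk a b), p.IsPath ∧
    ∀ v, v ∉ p.support → G.degree v ≤ 2

/-!
Write `h` for `homNumber G`. The two halves of a geodesic are homometric, so all distances are at
most `2 * h`; hence the spine has at most `2 * h + 1` vertices and every leg at most `2 * h`. At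
each spine vertex, order the legs by decreasing length and pair the second with the first, the
fourth with the third, and so on. Truncating the longer leg of each pair to the length of the
shorter one gives two homometric sets, because exchanging paired legs is realised by folding maps
that do not increase distances. The lengths of the legs at one spine vertex form a decreasing
sequence, so they exceed twice the total length of the shorter legs of the pairs by at most the
longest length, that is by at most `2 * h`. Altogether
`n ≤ (2 * h + 1) + (2 * h + 2 * h * (2 * h + 1)) ≤ (2 * h + 2) ^ 2`.
-/

section Homometric

variable {V κ : Type*} {G : SimpleGraph V}

lemma distMultiset_map (G : SimpleGraph V) (f : κ ↪ V) (S : Finset κ) [DecidableEq κ] :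
    distMultiset G (S.map f) = (S.sym2.filter fun p => ¬ p.IsDiag).val.map
      (Sym2.lift ⟨fun i j => G.dist (f i) (f j), fun _ _ => SimpleGraph.dist_comm⟩) := by
  classical
  have hdiag (p : Sym2 κ) : (f.sym2Map p).IsDiag ↔ p.IsDiag := Sym2.isDiag_map f.injective
  simp only [distMultiset, sym2_map, filter_map, Finset.map_val, Multiset.map_map]
  congr 1
  · ext p
    induction p
    rfl
  · simp only [Function.comp_def, hdiag]

lemma card_le_homNumber [Finite V] [Fintype κ] (f g : κ ↪ V) (hfg : ∀ i j, f i ≠ g j)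
    (hdist : ∀ i j, G.dist (f i) (f j) = G.dist (g i) (g j)) :
    Fintype.card κ ≤ homNumber G := by
  classical
  have := Fintype.ofFinite V
  refine le_csSup ⟨Fintype.card V, ?_⟩
    ⟨univ.map f, univ.map g, ⟨?_, ?_⟩, card_map f, card_map g⟩
  · rintro _ ⟨S, -, -, rfl, -⟩
    exact card_le_univ S
  · simpa [Finset.disjoint_left] using fun i j => (hfg i j).symm
  · simp only [distMultiset_map, hdist]

end Homometric

section Distance

variable {V : Type*} {G : SimpleGraph V}

lemma le_add_dist_of_adj (hG : G.Connected) {f : V → ℕ}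
    (hf : ∀ u v, G.Adj u v → f u ≤ f v + 1) (u v : V) : f u ≤ f v + G.dist u v := by
  obtain ⟨w, hw⟩ := hG.exists_walk_length_eq_dist u v
  rw [← hw]
  clear hw
  induction w with
  | nil => simp
  | cons h p ih =>
    have := hf _ _ h
    rw [SimpleGraph.Walk.length_cons]
    omega

lemma dist_map_le_of_adj (hG : G.Connected) {Φ : V → V}
    (hΦ : ∀ u v, G.Adj u v → G.dist (Φ u) (Φ v) ≤ 1) (u v : V) :
    G.dist (Φ u) (Φ v) ≤ G.dist u v := by
  have h := le_add_dist_of_adj hG (f := fun x => G.dist (Φ x) (Φ v)) (fun x y hxy =>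
    (hG.dist_triangle (v := Φ y)).trans (by have := hΦ x y hxy; omega)) u v
  simpa using h

lemma length_eq_dist_of_isPath (hT : G.IsTree) {u v : V} {p : G.Walk u v} (hp : p.IsPath) :
    p.length = G.dist u v := by
  obtain ⟨q, hq, hlen⟩ := hT.connected.exists_path_of_dist u v
  rw [← hlen, (hT.existsUnique_path u v).unique hp hq]

lemma dist_getVert_add {u v : V} {w : G.Walk u v} (hw : w.length = G.dist u v) {i j : ℕ}
    (hij : i + j ≤ w.length) : G.dist (w.getVert i) (w.getVert (i + j)) = j := by
  rw [← w.drop_getVert, ← SimpleGraph.length_eq_dist_of_subwalk hw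
    (((w.drop i).isSubwalk_take j).trans (w.isSubwalk_drop i)),
    SimpleGraph.Walk.take_length, SimpleGraph.Walk.drop_length]
  omega

lemma dist_getVert {u v : V} {w : G.Walk u v} (hw : w.length = G.dist u v) {i j : ℕ}
    (hi : i ≤ w.length) (hj : j ≤ w.length) :
    G.dist (w.getVert i) (w.getVert j) = Nat.dist i j := by
  wlog hij : i ≤ j generalizing i j
  · rw [SimpleGraph.dist_comm, Nat.dist_comm, this hj hi (by omega)]
  · obtain ⟨d, rfl⟩ := Nat.exists_eq_add_of_le hij
    rw [dist_getVert_add hw hj, Nat.dist_eq_sub_of_le hij, Nat.add_sub_cancel_left]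

lemma dist_le_two_mul_homNumber [Finite V] (hG : G.Connected) (u v : V) :
    G.dist u v ≤ 2 * homNumber G := by
  obtain ⟨w, hw⟩ := hG.exists_walk_length_eq_dist u v
  have hinj {i j : ℕ} (hi : i ≤ w.length) (hj : j ≤ w.length)
      (h : w.getVert i = w.getVert j) : i = j :=
    (w.isPath_of_length_eq_dist hw).getVert_injOn hi hj h
  let half (c : ℕ) (hc : c + (w.length + 1) / 2 ≤ w.length + 1) : Fin ((w.length + 1) / 2) ↪ V :=
    ⟨fun i => w.getVert (i + c), fun i j h => by
      have := hinj (by omega) (by omega) h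
      omega⟩
  have hcard := card_le_homNumber (G := G) (half 0 (by omega))
    (half ((w.length + 1) / 2) (by omega))
    (fun i j h => by
      have := hinj (by omega) (by omega) h
      omega)
    (fun i j => by
      change G.dist (w.getVert (i + 0)) (w.getVert (j + 0)) =
        G.dist (w.getVert (i + (w.length + 1) / 2)) (w.getVert (j + (w.length + 1) / 2))
      rw [dist_getVert hw (by omega) (by omega), dist_getVert hw (by omega) (by omega)]
      simp only [Nat.dist_add_add_right])
  rw [Fintype.card_fin] at hcard
  omega

end Distance

section Pairing

variable {α β : Type*}

lemma exists_fiberwise_rank {γ : Type*} [LinearOrder γ] (A : Finset α) (ℓ : α → γ) (π : α → β) :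
    ∃ r : α → ℕ, (∀ x ∈ A, ∀ y ∈ A, π x = π y → r x = r y → x = y) ∧
      ∀ x ∈ A, ∀ k < r x, ∃ y ∈ A, π y = π x ∧ r y = k ∧ ℓ x ≤ ℓ y := by
  classical
  induction A using Finset.induction_on_min_value ℓ with
  | empty => simp
  | insert a s ha hmin ih =>
    -- The new element `a` has the least `ℓ`; it gets the smallest rank free in its fibre.
    obtain ⟨r, hinj, hpred⟩ := ih
    have hfree : ∃ k, ∀ y ∈ s, π y = π a → r y ≠ k := by
      obtain ⟨k, hk⟩ := (s.image r).exists_notMem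
      exact ⟨k, fun y hy _ h => hk (h ▸ mem_image_of_mem r hy)⟩
    have hold {x : α} (hx : x ∈ s) : x ≠ a := fun h => ha (h ▸ hx)
    refine ⟨Function.update r a (Nat.find hfree), ?_, ?_⟩
    · have := Nat.find_spec hfree
      grind
    · intro x hx k hk
      rcases mem_insert.1 hx with rfl | hx
      · have := Nat.find_min hfree (m := k) (by simpa using hk)
        grind
      · obtain ⟨y, hy, h⟩ := hpred x hx k (by simpa [hold hx] using hk)
        exact ⟨y, mem_insert_of_mem hy, by simpa [hold hy] using h⟩

lemma exists_fiberwise_pairing (A : Finset α) (ℓ : α → ℕ) (π : α → β) (B : Finset β)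
    (hπ : ∀ x ∈ A, π x ∈ B) (M : ℕ) (hM : ∀ x ∈ A, ℓ x ≤ M) :
    ∃ (D : Finset α) (σ : α → α), Set.InjOn σ D ∧
      (∀ x ∈ D, σ x ∉ D ∧ π (σ x) = π x ∧ ℓ x ≤ ℓ (σ x)) ∧
      ∑ x ∈ A, ℓ x ≤ 2 * ∑ x ∈ D, ℓ x + #B * M := by
  classical
  obtain ⟨r, hinj, hpred⟩ := exists_fiberwise_rank A ℓ π
  choose! σ hσA hσπ hσr hσℓ using
    fun x (hx : x ∈ A) (h : r x ≠ 0) => hpred x hx (r x - 1) (by omega)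
  have hσinj {x y : α} (hx : x ∈ A) (hy : y ∈ A) (hx0 : r x ≠ 0) (hy0 : r y ≠ 0)
      (h : σ x = σ y) : x = y := by
    have := hσr x hx hx0
    have := hσr y hy hy0
    refine hinj x hx y hy ?_ ?_
    · rw [← hσπ x hx hx0, ← hσπ y hy hy0, h]
    · grind
  -- `σ` lowers the rank by one within a fibre, so ranks `2k + 1` and `2k` get paired.
  set D := {x ∈ A | r x % 2 = 1} with hD
  have hfirst : ∑ x ∈ A with r x = 0, ℓ x ≤ #B * M := by
    calc ∑ x ∈ A with r x = 0, ℓ x ≤ #{x ∈ A | r x = 0} * M :=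
          sum_le_card_nsmul _ _ _ fun x hx => hM x (mem_filter.1 hx).1
      _ ≤ #B * M := Nat.mul_le_mul_right M <| card_le_card_of_injOn π
          (fun x hx => hπ x (by grind))
          (fun x hx y hy h => hinj x (by grind) y (by grind) h (by grind))
  have heven : ∑ x ∈ A with r x ≠ 0 ∧ r x % 2 = 0, ℓ x ≤ ∑ x ∈ D, ℓ x := by
    set E := {x ∈ A | r x ≠ 0 ∧ r x % 2 = 0}
    calc ∑ x ∈ E, ℓ x ≤ ∑ x ∈ E, ℓ (σ x) := sum_le_sum fun x hx => hσℓ x (by grind) (by grind)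
      _ = ∑ x ∈ E.image σ, ℓ x := (sum_image fun x hx y hy h =>
          hσinj (by grind) (by grind) (by grind) (by grind) h).symm
      _ ≤ ∑ x ∈ D, ℓ x := sum_le_sum_of_subset (by grind)
  have hsplit : ∑ x ∈ A, ℓ x = ∑ x ∈ A with r x = 0, ℓ x + ∑ x ∈ D, ℓ x +
      ∑ x ∈ A with r x ≠ 0 ∧ r x % 2 = 0, ℓ x := by
    simp only [hD, sum_filter, ← sum_add_distrib]
    refine sum_congr rfl fun x _ => ?_
    split_ifs <;> omega
  exact ⟨D, σ, fun x hx y hy h => hσinj (by grind) (by grind) (by grind) (by grind) h,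
    by grind, by omega⟩

end Pairing

/-- A presentation of `G` as the vertex set `P` with pairwise disjoint paths, the legs, attached
to it. The legs are indexed by `ι`; leg `t` runs through `vert t 1, …, vert t (length t)` outside
`P` and is attached at `vert t 0 ∈ P`. The values of `vert t` beyond `length t` are junk. -/
structure LegSystem {V : Type*} (G : SimpleGraph V) (P : Finset V) (ι : Type*) where
  length : ι → ℕ
  vert : ι → ℕ → V
  vert_zero_mem : ∀ t, vert t 0 ∈ P
  vert_succ_notMem : ∀ {t i}, i < length t → vert t (i + 1) ∉ P
  vert_succ_inj : ∀ {s t i j}, i < length s → j < length t →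
    vert s (i + 1) = vert t (j + 1) → s = t ∧ i = j
  exists_vert_succ : ∀ {v}, v ∉ P → ∃ t, ∃ i < length t, vert t (i + 1) = v
  adj_vert : ∀ {t i}, i < length t → G.Adj (vert t i) (vert t (i + 1))
  mem_or_eq_vert_of_adj : ∀ {u v}, G.Adj u v → (u ∈ P ∧ v ∈ P) ∨
    ∃ t, ∃ i < length t, s(u, v) = s(vert t i, vert t (i + 1))

namespace LegSystem

variable {V ι κ α : Type*} {G : SimpleGraph V} {P : Finset V} (L : LegSystem G P ι)

lemma exists_extension (g : V → α) (f : ι → ℕ → α) (hf : ∀ t, f t 0 = g (L.vert t 0)) :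
    ∃ F : V → α, (∀ p ∈ P, F p = g p) ∧ ∀ t, ∀ i ≤ L.length t, F (L.vert t i) = f t i := by
  classical
  choose leg pos hpos hvert using fun v (hv : v ∉ P) => L.exists_vert_succ hv
  refine ⟨fun v => if hv : v ∈ P then g v else f (leg v hv) (pos v hv + 1),
    fun p hp => dif_pos hp, ?_⟩
  rintro t (_ | i) hi
  · exact (dif_pos (L.vert_zero_mem t)).trans (hf t).symm
  · have hnot := L.vert_succ_notMem hi
    obtain ⟨hleg, hi'⟩ := L.vert_succ_inj (hpos _ hnot) hi (hvert _ hnot)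
    exact (dif_neg hnot).trans (by rw [hleg, hi'])

lemma length_le_dist (hG : G.Connected) (t : ι) :
    L.length t ≤ G.dist (L.vert t (L.length t)) (L.vert t 0) := by
  obtain ⟨height, hP, hleg⟩ := L.exists_extension (fun _ => 0) (fun _ i => i) fun _ => rfl
  have hlip (u v : V) (huv : G.Adj u v) : height u ≤ height v + 1 := by
    rcases L.mem_or_eq_vert_of_adj huv with ⟨hu, -⟩ | ⟨s, i, hi, h⟩
    · simp [hP u hu]
    · rcases Sym2.eq_iff.1 h with ⟨rfl, rfl⟩ | ⟨rfl, rfl⟩ <;> grind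
  have h := le_add_dist_of_adj hG hlip (L.vert t (L.length t)) (L.vert t 0)
  rwa [hleg t _ le_rfl, hleg t 0 (Nat.zero_le _), zero_add] at h

lemma exists_fold (hG : G.Connected) {τ : ι → ι} (hτ : ∀ t, L.vert (τ t) 0 = L.vert t 0) :
    ∃ fold : V → V, (∀ u v, G.dist (fold u) (fold v) ≤ G.dist u v) ∧
      ∀ t i, i ≤ L.length t → i ≤ L.length (τ t) → fold (L.vert t i) = L.vert (τ t) i := by
  -- Where leg `t` is longer than leg `τ t`, its excess collapses to the far end of leg `τ t`.
  obtain ⟨fold, hP, hleg⟩ := L.exists_extension id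
    (fun t i => L.vert (τ t) (min i (L.length (τ t)))) fun t => by rw [Nat.zero_min, hτ, id]
  refine ⟨fold, dist_map_le_of_adj hG fun u v huv => ?_, fun t i hi hi' => ?_⟩
  · have hstep {t : ι} {i : ℕ} (hi : i < L.length t) :
        G.dist (fold (L.vert t i)) (fold (L.vert t (i + 1))) ≤ 1 := by
      rw [hleg t _ hi.le, hleg t _ hi]
      rcases lt_or_ge i (L.length (τ t)) with h | h
      · rw [min_eq_left h.le, min_eq_left h]
        exact (SimpleGraph.dist_eq_one_iff_adj.2 (L.adj_vert h)).le
      · rw [min_eq_right h, min_eq_right (h.trans i.le_succ), SimpleGraph.dist_self]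
        exact Nat.zero_le 1
    rcases L.mem_or_eq_vert_of_adj huv with ⟨hu, hv⟩ | ⟨t, i, hi, h⟩
    · rw [hP u hu, hP v hv]
      exact (SimpleGraph.dist_eq_one_iff_adj.2 huv).le
    · rcases Sym2.eq_iff.1 h with ⟨rfl, rfl⟩ | ⟨rfl, rfl⟩
      · exact hstep hi
      · rw [SimpleGraph.dist_comm]
        exact hstep hi
  · rw [hleg t i hi, min_eq_left hi']

lemma dist_vert_le (hG : G.Connected) {a b : κ → ι} (ha : a.Injective)
    (hab : ∀ x, L.vert (b x) 0 = L.vert (a x) 0) {x y : κ} {i j : ℕ}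
    (hi : i ≤ L.length (a x)) (hi' : i ≤ L.length (b x))
    (hj : j ≤ L.length (a y)) (hj' : j ≤ L.length (b y)) :
    G.dist (L.vert (b x) i) (L.vert (b y) j) ≤ G.dist (L.vert (a x) i) (L.vert (a y) j) := by
  have hτ (t : ι) : L.vert (Function.extend a b id t) 0 = L.vert t 0 := by
    by_cases ht : ∃ x, a x = t
    · obtain ⟨x, rfl⟩ := ht
      rw [ha.extend_apply, hab]
    · rw [Function.extend_apply' b id t ht, id]
  obtain ⟨fold, hdist, hfold⟩ := L.exists_fold hG hτ
  have hx := hfold (a x) i hi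
  have hy := hfold (a y) j hj
  rw [ha.extend_apply] at hx hy
  rw [← hx hi', ← hy hj']
  exact hdist _ _

lemma sum_length_le_homNumber [Finite V] [Fintype κ] (hG : G.Connected) {a b : κ → ι}
    (ha : a.Injective) (hb : b.Injective) (hne : ∀ x y, a x ≠ b y)
    (hab : ∀ x, L.vert (b x) 0 = L.vert (a x) 0)
    (hlen : ∀ x, L.length (a x) ≤ L.length (b x)) : ∑ x, L.length (a x) ≤ homNumber G := by
  let points (c : κ → ι) (hc : c.Injective) (hac : ∀ x, L.length (a x) ≤ L.length (c x)) :
      (Σ x, Fin (L.length (a x))) ↪ V :=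
    ⟨fun x => L.vert (c x.1) (x.2 + 1), by
      rintro ⟨x, i⟩ ⟨y, j⟩ h
      obtain ⟨hxy, hij⟩ := L.vert_succ_inj (i.2.trans_le (hac x)) (j.2.trans_le (hac y)) h
      obtain rfl := hc hxy
      rw [Fin.ext hij]⟩
  have hcard := card_le_homNumber (G := G) (points a ha fun _ => le_rfl) (points b hb hlen)
    (fun ⟨x, i⟩ ⟨y, j⟩ h => hne x y (L.vert_succ_inj i.2 (j.2.trans_le (hlen y)) h).1)
    (fun ⟨x, i⟩ ⟨y, j⟩ =>
      le_antisymm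
        (L.dist_vert_le hG hb (fun x => (hab x).symm) (i.2.trans_le (hlen x)) i.2
          (j.2.trans_le (hlen y)) j.2)
        (L.dist_vert_le hG ha hab i.2 (i.2.trans_le (hlen x)) j.2 (j.2.trans_le (hlen y))))
  simpa only [Fintype.card_sigma, Fintype.card_fin] using hcard

lemma card_le_card_add_sum_length [Fintype V] [Fintype ι] :
    Fintype.card V ≤ #P + ∑ t, L.length t := by
  let enum : P ⊕ (Σ t, Fin (L.length t)) → V :=
    Sum.elim (↑) fun x => L.vert x.1 (x.2 + 1)
  have hsurj : enum.Surjective := fun v => by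
    by_cases hv : v ∈ P
    · exact ⟨.inl ⟨v, hv⟩, rfl⟩
    · obtain ⟨t, i, hi, rfl⟩ := L.exists_vert_succ hv
      exact ⟨.inr ⟨t, i, hi⟩, rfl⟩
  simpa using Fintype.card_le_of_surjective enum hsurj

theorem card_le [Fintype V] [Finite ι] (L : LegSystem G P ι) (hG : G.Connected) :
    Fintype.card V ≤ #P * (2 * homNumber G + 1) + 2 * homNumber G := by
  have := Fintype.ofFinite ι
  obtain ⟨D, σ, hinj, hσ, hsum⟩ := exists_fiberwise_pairing univ L.length (L.vert · 0) P
    (fun t _ => L.vert_zero_mem t) (2 * homNumber G)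
    fun t _ => (L.length_le_dist hG t).trans (dist_le_two_mul_homNumber hG _ _)
  have hD : ∑ t ∈ D, L.length t ≤ homNumber G := by
    rw [← sum_coe_sort]
    exact L.sum_length_le_homNumber hG Subtype.val_injective hinj.injective
      (fun s t (h : s.1 = σ t.1) => (hσ t t.2).1 (h ▸ s.2))
      (fun t => (hσ t t.2).2.1) fun t => (hσ t t.2).2.2
  have hV := L.card_le_card_add_sum_length
  linarith

end LegSystem

/-- `par` is the parent map of a graph `G` consisting of `P` with paths, the legs, attached to it:
it moves every vertex outside `P` one step towards `P` along its leg, and it preserves `P` but is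
otherwise arbitrary there. -/
structure IsLegParent {V : Type*} (G : SimpleGraph V) (P : Finset V) (par : V → V) : Prop where
  map_mem : ∀ {v}, v ∈ P → par v ∈ P
  exists_iterate_mem : ∀ v, ∃ k, par^[k] v ∈ P
  adj_map : ∀ {v}, v ∉ P → G.Adj v (par v)
  eq_of_map_eq : ∀ {u v}, par u = par v → par u ∉ P → u = v
  mem_or_map_eq_of_adj : ∀ {u v}, G.Adj u v → (u ∈ P ∧ v ∈ P) ∨ par u = v ∨ par v = u

namespace IsLegParent

variable {V : Type*} {G : SimpleGraph V} {P : Finset V} {par : V → V}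

open Classical in
/-- The number of steps from `v` to `P`. -/
noncomputable def depth (h : IsLegParent G P par) (v : V) : ℕ :=
  Nat.find (h.exists_iterate_mem v)

lemma iterate_mem_iff (h : IsLegParent G P par) {v : V} {k : ℕ} :
    par^[k] v ∈ P ↔ h.depth v ≤ k := by
  classical
  refine ⟨fun hk => Nat.find_min' _ hk, fun hk => ?_⟩
  obtain ⟨d, rfl⟩ := Nat.exists_eq_add_of_le' hk
  rw [Function.iterate_add_apply]
  exact Set.MapsTo.iterate (s := (P : Set V)) (fun _ => h.map_mem) d
    (Nat.find_spec (h.exists_iterate_mem v))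

/-- The free ends of the legs: the vertices outside `P` that are the parent of no vertex. -/
abbrev Tip (P : Finset V) (par : V → V) : Type _ := {t : V // t ∉ P ∧ ∀ u, par u ≠ t}

lemma exists_tip_iterate_eq [Finite V] (h : IsLegParent G P par) {v : V} (hv : v ∉ P) :
    ∃ (t : Tip P par) (k : ℕ), par^[k] t.1 = v := by
  obtain ⟨t, ⟨k, rfl⟩, hmax⟩ :=
    Set.exists_max_image {u | ∃ k, par^[k] u = v} h.depth (Set.toFinite _) ⟨v, 0, rfl⟩
  refine ⟨⟨t, fun ht => hv ?_, ?_⟩, k, rfl⟩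
  · exact h.iterate_mem_iff.2 ((h.iterate_mem_iff (k := 0)).1 ht |>.trans k.zero_le)
  · rintro u rfl
    have hu : h.depth u ≤ h.depth (par u) := hmax u ⟨k + 1, rfl⟩
    rcases hd : h.depth u with _ | d
    · exact hv ((h.iterate_mem_iff (v := u) (k := k + 1)).2 (by omega))
    · have : h.depth (par u) ≤ d := h.iterate_mem_iff.1 (h.iterate_mem_iff (k := d + 1).2 hd.le)
      omega

lemma tip_eq_of_iterate_eq (h : IsLegParent G P par) {s t : Tip P par} {k l : ℕ}
    (hst : par^[k] s.1 = par^[l] t.1) (hP : par^[k] s.1 ∉ P) : s = t ∧ k = l := by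
  induction k generalizing l with
  | zero =>
    cases l with
    | zero => exact ⟨Subtype.ext hst, rfl⟩
    | succ l =>
      rw [Function.iterate_succ_apply'] at hst
      exact absurd hst.symm (s.2.2 _)
  | succ k ih =>
    cases l with
    | zero =>
      rw [Function.iterate_succ_apply'] at hst
      exact absurd hst (t.2.2 _)
    | succ l =>
      rw [Function.iterate_succ_apply'] at hst hP
      rw [Function.iterate_succ_apply'] at hst
      obtain ⟨rfl, rfl⟩ := ih (h.eq_of_map_eq hst hP) fun hmem => hP (h.map_mem hmem)
      exact ⟨rfl, rfl⟩

lemma iterate_depth_sub (h : IsLegParent G P par) {v : V} {i : ℕ} (hi : i < h.depth v) :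
    par^[h.depth v - i] v = par (par^[h.depth v - (i + 1)] v) := by
  rw [← Function.iterate_succ_apply' par]
  congr 1
  omega

lemma iterate_depth_sub_succ_notMem (h : IsLegParent G P par) {v : V} {i : ℕ}
    (hi : i < h.depth v) : par^[h.depth v - (i + 1)] v ∉ P := by
  rw [h.iterate_mem_iff]
  omega

lemma exists_tip_iterate_depth_sub_eq [Finite V] (h : IsLegParent G P par) {v : V} (hv : v ∉ P) :
    ∃ t : Tip P par, ∃ i < h.depth t.1, par^[h.depth t.1 - (i + 1)] t.1 = v := by
  obtain ⟨t, k, rfl⟩ := h.exists_tip_iterate_eq hv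
  rw [h.iterate_mem_iff] at hv
  exact ⟨t, h.depth t.1 - (k + 1), by omega, by congr 1; omega⟩

/-- The legs of `G`, each indexed by its tip. -/
noncomputable def legSystem [Finite V] (h : IsLegParent G P par) : LegSystem G P (Tip P par) where
  length t := h.depth t.1
  vert t i := par^[h.depth t.1 - i] t.1
  vert_zero_mem t := h.iterate_mem_iff.2 le_rfl
  vert_succ_notMem := h.iterate_depth_sub_succ_notMem
  vert_succ_inj hi hj hij := by
    obtain ⟨rfl, _⟩ := h.tip_eq_of_iterate_eq hij (h.iterate_depth_sub_succ_notMem hi)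
    exact ⟨rfl, by omega⟩
  exists_vert_succ := h.exists_tip_iterate_depth_sub_eq
  adj_vert hi := by
    rw [h.iterate_depth_sub hi]
    exact (h.adj_map (h.iterate_depth_sub_succ_notMem hi)).symm
  mem_or_eq_vert_of_adj {u v} huv := by
    have hedge {w : V} : (w ∈ P ∧ par w ∈ P) ∨ ∃ t : Tip P par, ∃ i < h.depth t.1,
        s(par w, w) = s(par^[h.depth t.1 - i] t.1, par^[h.depth t.1 - (i + 1)] t.1) := by
      by_cases hw : w ∈ P
      · exact .inl ⟨hw, h.map_mem hw⟩
      · obtain ⟨t, i, hi, rfl⟩ := h.exists_tip_iterate_depth_sub_eq hw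
        exact .inr ⟨t, i, hi, by rw [h.iterate_depth_sub hi]⟩
    rcases h.mem_or_map_eq_of_adj huv with hP | rfl | rfl
    · exact .inl hP
    · rw [Sym2.eq_swap]
      exact hedge
    · rw [and_comm]
      exact hedge

end IsLegParent

section RootParent

variable {V : Type*} {G : SimpleGraph V} (hT : G.IsTree) {a u v : V}

/-- The parent of `v` in the tree `G` rooted at `a`; the root is its own parent. -/
noncomputable def rootParent (hT : G.IsTree) (a v : V) : V :=
  (hT.existsUnique_path a v).choose.penultimate

lemma rootParent_eq_penultimate {p : G.Walk a v} (hp : p.IsPath) :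
    rootParent hT a v = p.penultimate := by
  have h := hT.existsUnique_path a v
  rw [rootParent, h.unique h.choose_spec.1 hp]

lemma rootParent_getVert {p : G.Walk a v} (hp : p.IsPath) {i : ℕ} (hi : i ≤ p.length) :
    rootParent hT a (p.getVert i) = p.getVert (i - 1) := by
  rw [rootParent_eq_penultimate hT (hp.take i), SimpleGraph.Walk.penultimate,
    SimpleGraph.Walk.take_length, SimpleGraph.Walk.take_getVert, min_eq_left hi,
    min_eq_right (Nat.sub_le i 1)]

lemma rootParent_self : rootParent hT a a = a :=
  rootParent_eq_penultimate hT SimpleGraph.Walk.IsPath.nil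

lemma iterate_rootParent_getVert {p : G.Walk a v} (hp : p.IsPath) {i : ℕ} (hi : i ≤ p.length) :
    (rootParent hT a)^[i] (p.getVert i) = a := by
  induction i with
  | zero => exact p.getVert_zero
  | succ i ih => rw [Function.iterate_succ_apply, rootParent_getVert hT hp hi, Nat.add_sub_cancel,
      ih (Nat.le_of_succ_le hi)]

lemma exists_iterate_rootParent_eq (v : V) : ∃ k, (rootParent hT a)^[k] v = a := by
  obtain ⟨p, hp, -⟩ := hT.existsUnique_path a v
  exact ⟨p.length, by simpa using iterate_rootParent_getVert hT hp le_rfl⟩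

lemma adj_rootParent (hv : v ≠ a) : G.Adj v (rootParent hT a v) := by
  obtain ⟨p, hp, -⟩ := hT.existsUnique_path a v
  rw [rootParent_eq_penultimate hT hp]
  exact (p.adj_penultimate (SimpleGraph.Walk.not_nil_of_ne hv.symm)).symm

lemma rootParent_rootParent_ne (hv : v ≠ a) : rootParent hT a (rootParent hT a v) ≠ v := by
  obtain ⟨p, hp, -⟩ := hT.existsUnique_path a v
  have hpos : 0 < p.length :=
    SimpleGraph.Walk.not_nil_iff_lt_length.1 (SimpleGraph.Walk.not_nil_of_ne hv.symm)
  rw [rootParent_eq_penultimate hT hp, SimpleGraph.Walk.penultimate,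
    rootParent_getVert hT hp (Nat.sub_le _ 1)]
  intro h
  have hle : p.length - 1 - 1 ≤ p.length := by omega
  have := hp.getVert_injOn hle (le_refl p.length) (h.trans p.getVert_length.symm)
  omega

lemma rootParent_eq_or_of_adj (huv : G.Adj u v) :
    rootParent hT a u = v ∨ rootParent hT a v = u := by
  obtain ⟨p, hp, -⟩ := hT.existsUnique_path a u
  by_cases hv : v ∈ p.support
  · left
    rw [rootParent_eq_penultimate hT hp, hT.isAcyclic.eq_penultimate_of_adj_end hp huv hv]
  · right
    rw [rootParent_eq_penultimate hT (hp.concat hv huv), SimpleGraph.Walk.penultimate_concat]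

lemma eq_of_rootParent_eq {x : V} [Fintype (G.neighborSet x)] (hx : G.degree x ≤ 2) (hxa : x ≠ a)
    (hu : rootParent hT a u = x) (hv : rootParent hT a v = x) : u = v := by
  by_contra huv
  have hne {w : V} (hw : rootParent hT a w = x) : w ≠ a := by
    rintro rfl
    exact hxa (hw.symm.trans (rootParent_self hT))
  have hadj {w : V} (hw : rootParent hT a w = x) : w ∈ G.neighborFinset x := by
    rw [SimpleGraph.mem_neighborFinset, ← hw]
    exact (adj_rootParent hT (hne hw)).symm
  have hparent {w : V} (hw : rootParent hT a w = x) : w ≠ rootParent hT a x :=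
    hw ▸ (rootParent_rootParent_ne hT (hne hw)).symm
  have hdeg : 2 < #(G.neighborFinset x) := two_lt_card.2 ⟨u, hadj hu, v, hadj hv,
    rootParent hT a x, by simpa using adj_rootParent hT hxa, huv, hparent hu, hparent hv⟩
  rw [SimpleGraph.card_neighborFinset_eq_degree] at hdeg
  omega

lemma isLegParent_rootParent [G.LocallyFinite] [DecidableEq V] {b : V}
    {p : G.Walk a b} (hp : p.IsPath) (hdeg : ∀ v, v ∉ p.support → G.degree v ≤ 2) :
    IsLegParent G p.support.toFinset (rootParent hT a) where
  map_mem {v} hv := by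
    obtain ⟨i, rfl, hi⟩ :=
      SimpleGraph.Walk.mem_support_iff_exists_getVert.1 (List.mem_toFinset.1 hv)
    rw [rootParent_getVert hT hp hi]
    exact List.mem_toFinset.2 (p.getVert_mem_support _)
  exists_iterate_mem v := by
    obtain ⟨k, hk⟩ := exists_iterate_rootParent_eq hT (a := a) v
    exact ⟨k, by simp [hk]⟩
  adj_map hv := adj_rootParent hT (by rintro rfl; simp at hv)
  eq_of_map_eq huv hu := eq_of_rootParent_eq hT (hdeg _ (by simpa using hu))
    (fun h => by simp [h] at hu) rfl huv.symm
  mem_or_map_eq_of_adj huv := .inr (rootParent_eq_or_of_adj hT huv)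

end RootParent

lemma card_le_of_isHaircomb {V : Type*} [Fintype V] {G : SimpleGraph V} [DecidableRel G.Adj]
    (hG : IsHaircomb G) : Fintype.card V ≤ (2 * homNumber G + 2) ^ 2 := by
  classical
  obtain ⟨hT, a, b, p, hp, hdeg⟩ := hG
  have hspine : #p.support.toFinset ≤ 2 * homNumber G + 1 := by
    rw [List.toFinset_card_of_nodup hp.support_nodup, p.length_support,
      length_eq_dist_of_isPath hT hp]
    exact Nat.succ_le_succ (dist_le_two_mul_homNumber hT.connected a b)
  calc Fintype.card V
    _ ≤ #p.support.toFinset * (2 * homNumber G + 1) + 2 * homNumber G :=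
      (isLegParent_rootParent hT hp hdeg).legSystem.card_le hT.connected
    _ ≤ (2 * homNumber G + 1) * (2 * homNumber G + 1) + 2 * homNumber G := by gcongr
    _ ≤ (2 * homNumber G + 2) ^ 2 := by nlinarith

/-- For every haircomb `T` on `n` vertices, `h(T) ≥ √n/2 − 1`. -/
theorem stmt7 {V : Type*} [Fintype V] (G : SimpleGraph V) [DecidableRel G.Adj]
    (hG : IsHaircomb G) (n : ℕ) (hn : Fintype.card V = n) :
    Real.sqrt n / 2 - 1 ≤ homNumber G := by
  have hcard : (n : ℝ) ≤ (2 * homNumber G + 2) ^ 2 := by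
    exact_mod_cast hn ▸ card_le_of_isHaircomb hG
  have hsqrt : Real.sqrt n ≤ 2 * homNumber G + 2 := Real.sqrt_le_iff.2 ⟨by positivity, hcard⟩
  linarith
end

section
/- For every α > 0 and every ε > 0 there exists N = N(α, ε) such that for all n > N the following holds: if G is a connected graph on n vertices with diameter 2 whose number of edges is either at most n^(2−α) or at least C(n,2) − n^(2−α), then h(G) ≥ n/2 − εn. -/
open Finset

/-!
In a graph of diameter two all distances are one or two, so two vertex sets of equal size are
homometric as soon as they span equally many edges. Let `H` be the sparse one among `G` and its
complement. If `A` and `B` are disjoint and have equal degree sums in the subgraph of `H` induced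
by `U = A ∪ B`, then they span equally many edges of `H`, because the edges between them are counted
once in each sum.

After discarding the few vertices of high degree, let all degrees be at most `D`. Distributing
vertices pair by pair so as to counter the current imbalance splits any even set into halves whose
degree sums differ by at most `D`, and `D` disjoint pairs whose degrees differ by exactly one bring
this difference down to at most one. It is then zero, since the sum of all degrees is even.

To find such pairs, take a maximal family `F` of disjoint pairs of vertices that have equal degrees
but different neighbourhoods outside the pair. If `F` is small, delete the vertices it covers; among
the others, vertices of equal degree are twins, and placing twins in opposite halves balances almost
everything. If `F` is large, then for a dyadic scale `s` a fraction `1 / log D` of its pairs have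
about `s` private neighbours on each side. Deleting a random set of about `m / s` vertices, with `m`
a small multiple of the number of vertices, then hits with constant probability exactly one private
neighbour of such a pair, and turns it into a pair with degrees differing by one.
-/

section DegIn

variable {V : Type*} (H : SimpleGraph V) [DecidableRel H.Adj]

/-- The number of neighbours of `x` in `U`, that is, the degree of `x` in the subgraph of `H`
induced by `U` when `x ∈ U`. -/
def degIn (U : Finset V) (x : V) : ℕ :=
  #{y ∈ U | H.Adj x y}

lemma degIn_mono {U W : Finset V} (h : U ⊆ W) (x : V) : degIn H U x ≤ degIn H W x :=
  card_le_card (filter_subset_filter _ h)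

lemma degIn_univ [Fintype V] (x : V) : degIn H univ x = H.degree x := by
  rw [degIn, ← H.neighborFinset_eq_filter, H.card_neighborFinset_eq_degree]

lemma sum_degIn_comm (A B : Finset V) : ∑ x ∈ A, degIn H B x = ∑ y ∈ B, degIn H A y := by
  simpa only [degIn, bipartiteAbove, bipartiteBelow, H.adj_comm] using
    sum_card_bipartiteAbove_eq_sum_card_bipartiteBelow (s := A) (t := B) H.Adj

lemma sum_degIn_self (U : Finset V) :
    ∑ x ∈ U, degIn H U x = 2 * #{p ∈ U.sym2 | p ∈ H.edgeSet} := by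
  classical
  have hdeg (x : U) : (H.induce U).degree x = degIn H U x := by
    rw [← SimpleGraph.card_neighborFinset_eq_degree, degIn, ← card_map (.subtype _)]
    congr 1
    ext y
    simp only [mem_map, SimpleGraph.mem_neighborFinset, mem_filter, SimpleGraph.comap_adj,
      Function.Embedding.subtype_apply]
    exact ⟨fun ⟨a, ha, hay⟩ => hay ▸ ⟨a.2, ha⟩, fun h => ⟨⟨y, h.1⟩, h.2, rfl⟩⟩
  have hedge : (H.induce U).edgeFinset.map (Function.Embedding.subtype _).sym2Map =
      {p ∈ U.sym2 | p ∈ H.edgeSet} := by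
    ext p
    induction p with | _ x y
    simp [Sym2.exists]
    grind [H.adj_comm]
  rw [← hedge, card_map, ← SimpleGraph.sum_degrees_eq_twice_card_edges, ← sum_coe_sort]
  exact (sum_congr rfl fun x _ => hdeg x).symm

variable [DecidableEq V]

lemma degIn_union {A B : Finset V} (h : Disjoint A B) (x : V) :
    degIn H (A ∪ B) x = degIn H A x + degIn H B x := by
  rw [degIn, filter_union, card_union_of_disjoint (disjoint_filter_filter h), degIn, degIn]

lemma degIn_erase_of_not_adj {x v : V} (U : Finset V) (h : ¬ H.Adj x v) :
    degIn H (U.erase v) x = degIn H U x := by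
  rw [degIn, filter_erase, erase_eq_of_notMem (by simp [h]), degIn]

end DegIn

section Halving

variable {V : Type*} [DecidableEq V]

/-- `A` and `B` split `R` into two disjoint halves of equal size, the candidates for a homometric
pair. -/
structure IsHalving (R A B : Finset V) : Prop where
  disjoint : Disjoint A B
  card_eq : #A = #B
  union_eq : A ∪ B = R

lemma IsHalving.card_add_card {R A B : Finset V} (h : IsHalving R A B) : #A + #B = #R := by
  rw [← card_union_of_disjoint h.disjoint, h.union_eq]

lemma IsHalving.insert_insert {R A B : Finset V} (h : IsHalving R A B) {x y : V} (hxy : x ≠ y)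
    (hx : x ∉ R) (hy : y ∉ R) :
    IsHalving (insert x (insert y R)) (insert x A) (insert y B) := by
  obtain ⟨hAB, hcard, rfl⟩ := h
  simp only [mem_union, not_or] at hx hy
  refine ⟨?_, ?_, ?_⟩
  · simp only [disjoint_insert_left, disjoint_insert_right, mem_insert, not_or]
    exact ⟨⟨hxy.symm, hy.1⟩, hx.2, hAB⟩
  · rw [card_insert_of_notMem hx.1, card_insert_of_notMem hy.2, hcard]
  · rw [insert_union, union_insert]

section Balancing

variable {M : Type*} [AddCommGroup M] [LinearOrder M] [IsOrderedAddMonoid M]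

-- The larger of `d x`, `d y` joins the half with the smaller sum.
lemma IsHalving.exists_insert_insert {R A B : Finset V} (h : IsHalving R A B) (d : V → M) {x y : V}
    (hxy : x ≠ y) (hx : x ∉ R) (hy : y ∉ R) :
    ∃ A' B', IsHalving (insert x (insert y R)) A' B' ∧
      |∑ v ∈ A', d v - ∑ v ∈ B', d v| = |(|∑ v ∈ A, d v - ∑ v ∈ B, d v| - |d x - d y|)| := by
  have hxy' := h.insert_insert hxy hx hy
  have hyx' := h.insert_insert hxy.symm hy hx
  rw [Finset.insert_comm] at hyx'
  have hmem : x ∉ A ∧ x ∉ B ∧ y ∉ A ∧ y ∉ B := by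
    rw [← h.union_eq, mem_union, not_or] at hx hy
    exact ⟨hx.1, hx.2, hy.1, hy.2⟩
  obtain ⟨hxA, hxB, hyA, hyB⟩ := hmem
  have hsum_xy : ∑ v ∈ insert x A, d v - ∑ v ∈ insert y B, d v =
      ∑ v ∈ A, d v - ∑ v ∈ B, d v + (d x - d y) := by
    rw [sum_insert hxA, sum_insert hyB]; abel
  have hsum_yx : ∑ v ∈ insert y A, d v - ∑ v ∈ insert x B, d v =
      ∑ v ∈ A, d v - ∑ v ∈ B, d v - (d x - d y) := by
    rw [sum_insert hyA, sum_insert hxB]; abel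
  generalize ∑ v ∈ A, d v - ∑ v ∈ B, d v = s at *
  generalize d x - d y = t at *
  rcases le_total 0 s with hs | hs <;> rcases le_total 0 t with ht | ht
  · exact ⟨_, _, hyx', by rw [hsum_yx, abs_of_nonneg hs, abs_of_nonneg ht]⟩
  · exact ⟨_, _, hxy', by rw [hsum_xy, abs_of_nonneg hs, abs_of_nonpos ht, sub_neg_eq_add]⟩
  · exact ⟨_, _, hxy', by
      rw [hsum_xy, abs_of_nonpos hs, abs_of_nonneg ht, ← abs_neg, neg_add']⟩
  · exact ⟨_, _, hyx', by
      rw [hsum_yx, abs_of_nonpos hs, abs_of_nonpos ht, ← abs_neg, neg_sub_neg, neg_sub]⟩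

lemma exists_isHalving_abs_sub_le {d : V → M} {D : M} (hD : 0 ≤ D) {R : Finset V} (hR : Even #R)
    (hd : ∀ x ∈ R, 0 ≤ d x ∧ d x ≤ D) :
    ∃ A B, IsHalving R A B ∧ |∑ v ∈ A, d v - ∑ v ∈ B, d v| ≤ D := by
  obtain ⟨n, hn⟩ := hR
  induction n generalizing R with
  | zero =>
    obtain rfl : R = ∅ := card_eq_zero.1 hn
    exact ⟨∅, ∅, ⟨disjoint_empty_left _, rfl, empty_union _⟩, by simpa using hD⟩
  | succ n ih =>
    obtain ⟨x, hx, y, hy, hxy⟩ := one_lt_card.1 (by omega : 1 < #R)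
    have hyx : y ∈ R.erase x := mem_erase.2 ⟨hxy.symm, hy⟩
    obtain ⟨A, B, hAB, hle⟩ := ih (R := (R.erase x).erase y)
      (fun z hz => hd z (mem_of_mem_erase (mem_of_mem_erase hz)))
      (by rw [card_erase_of_mem hyx, card_erase_of_mem hx]; omega)
    obtain ⟨A', B', hAB', heq⟩ := hAB.exists_insert_insert d hxy (by simp) (by simp)
    rw [insert_erase hyx, insert_erase hx] at hAB'
    refine ⟨A', B', hAB', heq ▸ abs_sub_le_of_nonneg_of_le (abs_nonneg _) hle (abs_nonneg _) ?_⟩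
    exact abs_sub_le_of_nonneg_of_le (hd x hx).1 (hd x hx).2 (hd y hy).1 (hd y hy).2

end Balancing

/-- `F` consists of pairwise disjoint pairs of distinct vertices; pairs are ordered so that an
asymmetric relation between the two entries can be recorded. -/
structure DisjointPairs (F : Finset (V × V)) : Prop where
  ne : ∀ e ∈ F, e.1 ≠ e.2
  pairwiseDisjoint : (F : Set (V × V)).PairwiseDisjoint fun e => ({e.1, e.2} : Finset V)

/-- The set of vertices occurring in the pairs of `F`, which the pairs split into two halves when
they are disjoint. -/
def covered (F : Finset (V × V)) : Finset V :=
  F.biUnion fun e => {e.1, e.2}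

lemma mem_covered {F : Finset (V × V)} {x : V} : x ∈ covered F ↔ ∃ e ∈ F, x = e.1 ∨ x = e.2 := by
  simp [covered]

lemma covered_insert (e : V × V) (F : Finset (V × V)) :
    covered (insert e F) = insert e.1 (insert e.2 (covered F)) := by
  rw [covered, biUnion_insert, insert_union, singleton_union, covered]

lemma covered_subset {F : Finset (V × V)} {W : Finset V} (hF : F ⊆ W ×ˢ W) : covered F ⊆ W := by
  intro x hx
  obtain ⟨e, he, rfl | rfl⟩ := mem_covered.1 hx
  exacts [(mem_product.1 (hF he)).1, (mem_product.1 (hF he)).2]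

namespace DisjointPairs

variable {F F' : Finset (V × V)}

lemma mono (hF : DisjointPairs F) (h : F' ⊆ F) : DisjointPairs F' :=
  ⟨fun e he => hF.ne e (h he), hF.pairwiseDisjoint.subset (coe_subset.2 h)⟩

lemma insert {x y : V} (hF : DisjointPairs F) (hxy : x ≠ y) (hx : x ∉ covered F)
    (hy : y ∉ covered F) : DisjointPairs (insert (x, y) F) := by
  refine ⟨forall_mem_insert _ _ _ |>.2 ⟨hxy, hF.ne⟩, ?_⟩
  rw [coe_insert]
  refine hF.pairwiseDisjoint.insert fun e he _ => ?_
  rw [disjoint_insert_left, disjoint_singleton_left]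
  exact ⟨fun h => hx (mem_biUnion.2 ⟨e, he, h⟩), fun h => hy (mem_biUnion.2 ⟨e, he, h⟩)⟩

lemma notMem_covered_of_insert {e : V × V} (hF : DisjointPairs (Insert.insert e F)) (he : e ∉ F) :
    e.1 ∉ covered F ∧ e.2 ∉ covered F := by
  have hdisj : Disjoint ({e.1, e.2} : Finset V) (covered F) := by
    refine (disjoint_biUnion_right _ _ _).2 fun e' he' => ?_
    exact hF.pairwiseDisjoint (mem_insert_self _ _) (mem_insert_of_mem he')
      (fun h => he (h ▸ he'))
  simpa using hdisj

lemma card_covered (hF : DisjointPairs F) : #(covered F) = 2 * #F := by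
  rw [covered, card_biUnion hF.pairwiseDisjoint, sum_congr rfl fun e he => card_pair (hF.ne e he),
    sum_const, smul_eq_mul, mul_comm]

lemma eq_of_mem {e e' : V × V} {x : V} (hF : DisjointPairs F) (he : e ∈ F) (he' : e' ∈ F)
    (hx : x ∈ ({e.1, e.2} : Finset V)) (hx' : x ∈ ({e'.1, e'.2} : Finset V)) : e = e' :=
  hF.pairwiseDisjoint.elim_finset he he' x hx hx'

lemma injOn_fst (hF : DisjointPairs F) : Set.InjOn Prod.fst (F : Set (V × V)) :=
  fun e he e' he' h => hF.eq_of_mem he he' (x := e.1) (by simp) (by simp [h])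

lemma injOn_snd (hF : DisjointPairs F) : Set.InjOn Prod.snd (F : Set (V × V)) :=
  fun e he e' he' h => hF.eq_of_mem he he' (x := e.2) (by simp) (by simp [h])

lemma isHalving (hF : DisjointPairs F) :
    IsHalving (covered F) (F.image Prod.fst) (F.image Prod.snd) := by
  refine ⟨?_, ?_, ?_⟩
  · refine disjoint_left.2 fun x hx hx' => ?_
    obtain ⟨e, he, rfl⟩ := mem_image.1 hx
    obtain ⟨e', he', h⟩ := mem_image.1 hx'
    obtain rfl := hF.eq_of_mem he he' (x := e.1) (by simp) (by simp [h])
    exact hF.ne e he h.symm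
  · rw [card_image_of_injOn hF.injOn_fst, card_image_of_injOn hF.injOn_snd]
  · ext x
    simp only [mem_union, mem_image, mem_covered]
    grind

lemma card_filter_not_disjoint_le (hF : DisjointPairs F) (S : Finset V) :
    #{e ∈ F | ¬ Disjoint {e.1, e.2} S} ≤ #S := by
  refine card_le_card_of_forall_subsingleton (fun e x => x ∈ ({e.1, e.2} : Finset V))
    (fun e he => ?_) fun x _ e he e' he' => ?_
  · obtain ⟨x, hxe, hxS⟩ := not_disjoint_iff.1 (mem_filter.1 he).2
    exact ⟨x, hxS, hxe⟩
  · exact hF.eq_of_mem (mem_filter.1 he.1).1 (mem_filter.1 he'.1).1 he.2 he'.2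

end DisjointPairs

lemma exists_disjointPairs_maximal (P : V → V → Prop) (W : Finset V) :
    ∃ F ⊆ W ×ˢ W, DisjointPairs F ∧ (∀ e ∈ F, P e.1 e.2) ∧
      ∀ x ∈ W \ covered F, ∀ y ∈ W \ covered F, x ≠ y → ¬ P x y := by
  classical
  obtain ⟨F, hF, hmax⟩ := exists_max_image
    {F ∈ (W ×ˢ W).powerset | DisjointPairs F ∧ ∀ e ∈ F, P e.1 e.2} card
    ⟨∅, by simp [show DisjointPairs (∅ : Finset (V × V)) from ⟨by simp, by simp⟩]⟩
  simp only [mem_filter, mem_powerset] at hF hmax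
  obtain ⟨hFW, hdisj, hP⟩ := hF
  refine ⟨F, hFW, hdisj, hP, fun x hx y hy hxy hPxy => ?_⟩
  rw [mem_sdiff] at hx hy
  have hxyF : (x, y) ∉ F := fun h => hx.2 (mem_covered.2 ⟨_, h, .inl rfl⟩)
  have hle := hmax (insert (x, y) F)
    ⟨insert_subset (mk_mem_product hx.1 hy.1) hFW, hdisj.insert hxy hx.2 hy.2,
      forall_mem_insert _ _ _ |>.2 ⟨hPxy, hP⟩⟩
  rw [card_insert_of_notMem hxyF] at hle
  omega

-- Each pair lowers the imbalance by one until it reaches one.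
lemma IsHalving.exists_union_covered {d : V → ℤ} {D : ℤ} {R A B : Finset V} (h : IsHalving R A B)
    (hD : |∑ v ∈ A, d v - ∑ v ∈ B, d v| ≤ D) {F : Finset (V × V)} (hF : DisjointPairs F)
    (hRF : Disjoint R (covered F)) (hunit : ∀ e ∈ F, d e.1 + 1 = d e.2) :
    ∃ A' B', IsHalving (R ∪ covered F) A' B' ∧
      |∑ v ∈ A', d v - ∑ v ∈ B', d v| ≤ max 1 (D - #F) := by
  induction F using Finset.induction_on with
  | empty => exact ⟨A, B, by simpa [covered] using h, le_max_of_le_right (by simpa using hD)⟩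
  | insert e F he ih =>
    rw [covered_insert, disjoint_insert_right, disjoint_insert_right] at hRF
    obtain ⟨h₁, h₂⟩ := hF.notMem_covered_of_insert he
    obtain ⟨A₁, B₁, hAB₁, hle₁⟩ := ih (hF.mono (subset_insert _ _)) hRF.2.2
      fun e he => hunit e (mem_insert_of_mem he)
    obtain ⟨A₂, B₂, hAB₂, heq₂⟩ := hAB₁.exists_insert_insert d (hF.ne e (mem_insert_self _ _))
      (by simp [hRF.1, h₁]) (by simp [hRF.2.1, h₂])
    refine ⟨A₂, B₂, by rwa [covered_insert, union_insert, union_insert], ?_⟩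
    have hstep : |d e.1 - d e.2| = 1 := by simp [← hunit e (mem_insert_self _ _)]
    have hnonneg := abs_nonneg (∑ v ∈ A₁, d v - ∑ v ∈ B₁, d v)
    rw [heq₂, hstep, card_insert_of_notMem he, abs_le]
    push_cast
    omega

end Halving

section HomNumber

lemma map_ite_eq_replicate_add_replicate {α β : Type*} (s : Finset α) (p : α → Prop)
    [DecidablePred p] (a b : β) :
    s.val.map (fun x => if p x then a else b) =
      Multiset.replicate #{x ∈ s | p x} a + Multiset.replicate (#s - #{x ∈ s | p x}) b := by
  have hnot : #{x ∈ s | ¬ p x} = #s - #{x ∈ s | p x} :=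
    Nat.eq_sub_of_add_eq' (card_filter_add_card_filter_not p)
  rw [← hnot, ← Multiset.filter_add_not p s.val, Multiset.map_add,
    Multiset.map_congr rfl fun x hx => if_pos (Multiset.mem_filter.1 hx).2,
    Multiset.map_congr rfl fun x hx => if_neg (Multiset.mem_filter.1 hx).2]
  simp only [Multiset.map_const', card_def, filter_val]

lemma card_filter_sym2_not_isDiag {α : Type*} [DecidableEq α] (s : Finset α) :
    #{p ∈ s.sym2 | ¬ p.IsDiag} = (#s).choose 2 := by
  rw [sym2_eq_image, Sym2.filter_image_mk_not_isDiag, Sym2.card_image_offDiag]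

variable {V : Type*} {G H : SimpleGraph V} [DecidableRel H.Adj] {a b : ℕ}

lemma distMultiset_eq_of_dist_eq_ite
    (hdist : ∀ x y, x ≠ y → G.dist x y = if H.Adj x y then a else b) (S : Finset V) :
    distMultiset G S =
      Multiset.replicate #{p ∈ S.sym2 | p ∈ H.edgeSet} a +
        Multiset.replicate ((#S).choose 2 - #{p ∈ S.sym2 | p ∈ H.edgeSet}) b := by
  classical
  have hedge : {p ∈ {p ∈ S.sym2 | ¬ p.IsDiag} | p ∈ H.edgeSet} = {p ∈ S.sym2 | p ∈ H.edgeSet} := by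
    rw [filter_filter]
    exact filter_congr fun p _ => and_iff_right_of_imp H.not_isDiag_of_mem_edgeSet
  rw [← hedge, ← card_filter_sym2_not_isDiag, ← map_ite_eq_replicate_add_replicate]
  rw [distMultiset, Subsingleton.elim (Classical.decEq V) _]
  refine Multiset.map_congr rfl fun p hp => ?_
  induction p with | _ x y
  exact hdist x y (mem_filter.1 hp).2

lemma le_homNumber [Finite V] {A B : Finset V} (h : Homometric G A B) (hcard : #A = #B) :
    #A ≤ homNumber G := by
  have := Fintype.ofFinite V
  refine le_csSup ⟨Fintype.card V, ?_⟩ ⟨A, B, h, rfl, hcard.symm⟩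
  rintro _ ⟨S, _, _, rfl, _⟩
  exact card_le_univ S

variable [DecidableEq V]

variable (H) in
/-- A halving of `U` into two sets with the same sum of degrees in the subgraph of `H` induced by
`U`; the halves are homometric in any graph whose distances take one value on the edges of `H` and
one on its non-edges. -/
structure IsBalancedHalving (U A B : Finset V) : Prop extends IsHalving U A B where
  sum_eq : ∑ x ∈ A, degIn H U x = ∑ x ∈ B, degIn H U x

lemma IsBalancedHalving.card_filter_sym2_eq {U A B : Finset V} (h : IsBalancedHalving H U A B) :
    #{p ∈ A.sym2 | p ∈ H.edgeSet} = #{p ∈ B.sym2 | p ∈ H.edgeSet} := by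
  have hsum := h.sum_eq
  simp only [← h.union_eq, degIn_union H h.disjoint, sum_add_distrib, sum_degIn_self,
    sum_degIn_comm H A B] at hsum
  omega

lemma IsBalancedHalving.card_le_two_mul_homNumber [Finite V] {U A B : Finset V}
    (h : IsBalancedHalving H U A B)
    (hdist : ∀ x y, x ≠ y → G.dist x y = if H.Adj x y then a else b) :
    #U ≤ 2 * homNumber G := by
  have hle : #A ≤ homNumber G := by
    refine le_homNumber ⟨h.disjoint, ?_⟩ h.card_eq
    rw [distMultiset_eq_of_dist_eq_ite hdist, distMultiset_eq_of_dist_eq_ite hdist,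
      h.card_filter_sym2_eq, h.card_eq]
  rw [← h.card_add_card, ← h.card_eq]
  omega

end HomNumber

section Balanced

variable {V : Type*} [DecidableEq V] {H : SimpleGraph V} [DecidableRel H.Adj]

lemma exists_isBalancedHalving_of_even {U : Finset V} (hU : Even #U) {D : ℕ}
    (hD : ∀ x ∈ U, degIn H U x ≤ D) {F : Finset (V × V)} (hF : DisjointPairs F)
    (hFU : F ⊆ U ×ˢ U) (hunit : ∀ e ∈ F, degIn H U e.1 + 1 = degIn H U e.2) (hDF : D ≤ #F) :
    ∃ A B, IsBalancedHalving H U A B := by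
  have hsub := covered_subset hFU
  have hrest : Even #(U \ covered F) := by
    rw [card_sdiff_of_subset hsub, hF.card_covered, Nat.even_sub (by
      simpa [hF.card_covered] using card_le_card hsub)]
    simpa using hU
  obtain ⟨A₀, B₀, h₀, hle₀⟩ := exists_isHalving_abs_sub_le (d := fun x => (degIn H U x : ℤ))
    (Nat.cast_nonneg D) hrest fun x hx =>
      ⟨Nat.cast_nonneg _, Nat.cast_le.2 (hD x (mem_sdiff.1 hx).1)⟩
  obtain ⟨A, B, hAB, hle⟩ := h₀.exists_union_covered hle₀ hF sdiff_disjoint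
    fun e he => by exact_mod_cast hunit e he
  rw [sdiff_union_of_subset hsub] at hAB
  refine ⟨A, B, hAB, ?_⟩
  have heven : ∑ x ∈ A, degIn H U x + ∑ x ∈ B, degIn H U x =
      2 * #{p ∈ U.sym2 | p ∈ H.edgeSet} := by
    rw [← sum_union hAB.disjoint, hAB.union_eq, sum_degIn_self]
  rw [max_eq_left (by omega), ← Nat.cast_sum, ← Nat.cast_sum, abs_le] at hle
  omega

lemma exists_isBalancedHalving_of_two_mul_lt {W : Finset V} {D : ℕ}
    (hD : ∀ x ∈ W, degIn H W x ≤ D) {F : Finset (V × V)} (hF : DisjointPairs F)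
    (hFW : F ⊆ W ×ˢ W) (hunit : ∀ e ∈ F, degIn H W e.1 + 1 = degIn H W e.2)
    (hDF : 2 * D < #F) :
    ∃ U A B, IsBalancedHalving H U A B ∧ #W ≤ #U + 1 := by
  rcases Nat.even_or_odd #W with hW | hW
  · obtain ⟨A, B, hAB⟩ := exists_isBalancedHalving_of_even hW hD hF hFW hunit (by omega)
    exact ⟨W, A, B, hAB, by omega⟩
  obtain ⟨v, hv⟩ := card_pos.1 hW.pos
  set S := insert v {y ∈ W | H.Adj v y}
  set F' := {e ∈ F | Disjoint {e.1, e.2} S}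
  have hF' : ∀ e ∈ F', (e.1 ∉ S ∧ e.2 ∉ S) ∧ e.1 ∈ W ∧ e.2 ∈ W := by
    intro e he
    rw [mem_filter, disjoint_insert_left, disjoint_singleton_left] at he
    exact ⟨he.2, mem_product.1 (hFW he.1)⟩
  have hdeg {x : V} (hx : x ∈ W) (hxS : x ∉ S) : degIn H (W.erase v) x = degIn H W x := by
    refine degIn_erase_of_not_adj H W fun hadj => hxS ?_
    exact mem_insert_of_mem (mem_filter.2 ⟨hx, hadj.symm⟩)
  have hcard : #F ≤ #F' + (D + 1) := by
    have hS : #S ≤ D + 1 := (card_insert_le _ _).trans (Nat.succ_le_succ (hD v hv))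
    have hmeet := hF.card_filter_not_disjoint_le S
    have hsplit : #F' + #{e ∈ F | ¬ Disjoint {e.1, e.2} S} = #F :=
      card_filter_add_card_filter_not _
    omega
  obtain ⟨A, B, hAB⟩ := exists_isBalancedHalving_of_even (U := W.erase v) (F := F') (D := D)
    (by rw [card_erase_of_mem hv]; exact hW.tsub_odd odd_one)
    (fun x hx => (degIn_mono H (erase_subset _ _) x).trans (hD x (mem_of_mem_erase hx)))
    (hF.mono (filter_subset _ _))
    (fun e he => mk_mem_product
      (mem_erase.2 ⟨fun h => (hF' e he).1.1 (h ▸ mem_insert_self _ _), (hF' e he).2.1⟩)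
      (mem_erase.2 ⟨fun h => (hF' e he).1.2 (h ▸ mem_insert_self _ _), (hF' e he).2.2⟩))
    (fun e he => by
      rw [hdeg (hF' e he).2.1 (hF' e he).1.1, hdeg (hF' e he).2.2 (hF' e he).1.2]
      exact hunit e (mem_of_mem_filter e he))
    (by omega)
  exact ⟨_, A, B, hAB, (card_erase_add_one hv).ge⟩

end Balanced

section PrivateNbrs

variable {V : Type*} [DecidableEq V] (H : SimpleGraph V) [DecidableRel H.Adj]

/-- The neighbours of `x` in `W` that are private with respect to `y`: they are neither equal nor
adjacent to `y`. Deleting one of them lowers the degree of `x` but not that of `y`. -/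
def privateNbrs (W : Finset V) (x y : V) : Finset V :=
  {w ∈ W | H.Adj x w ∧ ¬ H.Adj y w ∧ w ≠ y}

variable {H} {W : Finset V} {x y : V}

lemma mem_privateNbrs {w : V} :
    w ∈ privateNbrs H W x y ↔ w ∈ W ∧ H.Adj x w ∧ ¬ H.Adj y w ∧ w ≠ y :=
  mem_filter

lemma card_privateNbrs_le_degIn : #(privateNbrs H W x y) ≤ degIn H W x :=
  card_le_card fun _ hw => mem_filter.2 ⟨(mem_privateNbrs.1 hw).1, (mem_privateNbrs.1 hw).2.1⟩

lemma privateNbrs_mono {U : Finset V} (h : U ⊆ W) :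
    privateNbrs H U x y ⊆ privateNbrs H W x y :=
  filter_subset_filter _ h

lemma privateNbrs_sdiff (Z : Finset V) :
    privateNbrs H (W \ Z) x y = privateNbrs H W x y \ Z := by
  ext w
  simp only [mem_privateNbrs, mem_sdiff]
  tauto

lemma notMem_privateNbrs_left : x ∉ privateNbrs H W x y :=
  fun h => H.loopless.irrefl x (mem_privateNbrs.1 h).2.1

lemma notMem_privateNbrs_right : y ∉ privateNbrs H W x y :=
  fun h => (mem_privateNbrs.1 h).2.2.2 rfl

lemma disjoint_privateNbrs_swap : Disjoint (privateNbrs H W x y) (privateNbrs H W y x) :=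
  disjoint_left.2 fun _ h h' => (mem_privateNbrs.1 h).2.2.1 (mem_privateNbrs.1 h').2.1

lemma degIn_add_card_privateNbrs (hx : x ∈ W) (hy : y ∈ W) :
    degIn H W x + #(privateNbrs H W y x) = degIn H W y + #(privateNbrs H W x y) := by
  have hsdiff (x y : V) : privateNbrs H W x y =
      {w ∈ W | H.Adj x w}.erase y \ {w ∈ W | H.Adj y w}.erase x := by
    ext w
    simp only [mem_privateNbrs, mem_sdiff, mem_erase, mem_filter]
    grind [H.ne_of_adj]
  have herase : #({w ∈ W | H.Adj x w}.erase y) + #(privateNbrs H W y x) =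
      #({w ∈ W | H.Adj y w}.erase x) + #(privateNbrs H W x y) := by
    rw [hsdiff x y, hsdiff y x, add_comm, card_sdiff_add_card, add_comm, card_sdiff_add_card,
      union_comm]
  by_cases hxy : H.Adj x y
  · have hx' := card_erase_add_one (s := {w ∈ W | H.Adj x w}) (mem_filter.2 ⟨hy, hxy⟩)
    have hy' := card_erase_add_one (s := {w ∈ W | H.Adj y w}) (mem_filter.2 ⟨hx, hxy.symm⟩)
    rw [degIn, degIn]
    omega
  · rwa [erase_eq_of_notMem (by simp [hxy]), erase_eq_of_notMem (by simp [hxy, H.adj_comm])]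
      at herase

lemma card_privateNbrs_eq (hx : x ∈ W) (hy : y ∈ W) (hdeg : degIn H W x = degIn H W y) :
    #(privateNbrs H W x y) = #(privateNbrs H W y x) := by
  have := degIn_add_card_privateNbrs (H := H) hx hy
  omega

lemma degIn_sdiff_add_one_eq (hx : x ∈ W) (hy : y ∈ W) (hdeg : degIn H W x = degIn H W y)
    {Z : Finset V} {t : V} (ht : t ∈ privateNbrs H W x y)
    (hZ : Z ∩ (privateNbrs H W x y ∪ privateNbrs H W y x ∪ {x, y}) = {t}) :
    x ∉ Z ∧ y ∉ Z ∧ degIn H (W \ Z) x + 1 = degIn H (W \ Z) y := by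
  have htZ : t ∈ Z := (mem_inter.1 (hZ ▸ mem_singleton_self t)).1
  have huniq {z : V} (hz : z ∈ Z)
      (hB : z ∈ privateNbrs H W x y ∪ privateNbrs H W y x ∪ {x, y}) : z = t :=
    mem_singleton.1 (hZ ▸ mem_inter.2 ⟨hz, hB⟩)
  have hxZ : x ∉ Z := fun h => notMem_privateNbrs_left (huniq h (by simp) ▸ ht)
  have hyZ : y ∉ Z := fun h => notMem_privateNbrs_right (huniq h (by simp) ▸ ht)
  have hxy : privateNbrs H (W \ Z) x y = (privateNbrs H W x y).erase t := by
    ext z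
    rw [privateNbrs_sdiff, mem_sdiff, mem_erase, and_comm]
    exact and_congr_left fun hz =>
      ⟨fun h ht => h (ht ▸ htZ), fun h hzZ => h (huniq hzZ (by simp [hz]))⟩
  have hyx : privateNbrs H (W \ Z) y x = privateNbrs H W y x := by
    rw [privateNbrs_sdiff, sdiff_eq_self_of_disjoint]
    refine disjoint_left.2 fun z hz hzZ => ?_
    obtain rfl := huniq hzZ (by simp [hz])
    exact disjoint_left.1 disjoint_privateNbrs_swap ht hz
  refine ⟨hxZ, hyZ, ?_⟩
  have hbal :=
    degIn_add_card_privateNbrs (H := H) (mem_sdiff.2 ⟨hx, hxZ⟩) (mem_sdiff.2 ⟨hy, hyZ⟩)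
  rw [hxy, hyx, ← card_privateNbrs_eq hx hy hdeg, ← card_erase_add_one ht] at hbal
  omega

lemma degIn_eq_of_privateNbrs_eq_empty {U : Finset V} (hUW : U ⊆ W) (hx : x ∈ U) (hy : y ∈ U)
    (hdeg : degIn H W x = degIn H W y) (hxy : privateNbrs H W x y = ∅) :
    degIn H U x = degIn H U y := by
  have hyx : privateNbrs H W y x = ∅ := by
    rw [← card_eq_zero, ← card_privateNbrs_eq (hUW hx) (hUW hy) hdeg, hxy, card_empty]
  have hbal := degIn_add_card_privateNbrs (H := H) hx hy
  rwa [subset_empty.1 ((privateNbrs_mono hUW).trans hxy.subset),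
    subset_empty.1 ((privateNbrs_mono hUW).trans hyx.subset), card_empty, add_zero,
    add_zero] at hbal

lemma exists_isBalancedHalving_of_privateNbrs_eq_empty {R : Finset V} (hRW : R ⊆ W) {D : ℕ}
    (hD : ∀ x ∈ R, degIn H W x ≤ D)
    (hR : ∀ x ∈ R, ∀ y ∈ R, x ≠ y → degIn H W x = degIn H W y → privateNbrs H W x y = ∅) :
    ∃ U A B, IsBalancedHalving H U A B ∧ #R ≤ #U + (D + 1) := by
  obtain ⟨M, hMR, hM, hdeg, hmax⟩ :=
    exists_disjointPairs_maximal (fun x y => degIn H W x = degIn H W y) R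
  have hsub := covered_subset hMR
  refine ⟨covered M, M.image Prod.fst, M.image Prod.snd, ⟨hM.isHalving, ?_⟩, ?_⟩
  · rw [sum_image hM.injOn_fst, sum_image hM.injOn_snd]
    refine sum_congr rfl fun e he => ?_
    have he₁ : e.1 ∈ covered M := mem_covered.2 ⟨e, he, .inl rfl⟩
    have he₂ : e.2 ∈ covered M := mem_covered.2 ⟨e, he, .inr rfl⟩
    exact degIn_eq_of_privateNbrs_eq_empty (hsub.trans hRW) he₁ he₂ (hdeg e he)
      (hR _ (hsub he₁) _ (hsub he₂) (hM.ne e he) (hdeg e he))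
  · have hrest : #(R \ covered M) ≤ D + 1 := by
      rw [← card_range (D + 1)]
      refine card_le_card_of_injOn (degIn H W) (fun x hx => ?_) fun x hx y hy hxy => ?_
      · exact mem_coe.2 (mem_range_succ_iff.2 (hD x (mem_sdiff.1 hx).1))
      · exact by_contra fun hne => hmax x hx y hy hne hxy
    rw [← card_sdiff_add_card_eq_card hsub]
    omega

end PrivateNbrs

section Sampling

lemma pow_le_two_mul_sub_pow {n b m : ℕ} (h : 2 * b * m ≤ n) : n ^ m ≤ 2 * (n - b) ^ m := by
  rcases m.eq_zero_or_pos with rfl | hm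
  · simp
  rcases n.eq_zero_or_pos with rfl | hn
  · simp [hm.ne']
  have hbn : b ≤ n := by nlinarith
  have hn' : (0 : ℝ) < n := Nat.cast_pos.2 hn
  have hhalf : (1 : ℝ) / 2 ≤ 1 + m * (-(b / n)) := by
    have : (2 * b * m : ℝ) ≤ n := by exact_mod_cast h
    field_simp
    linarith
  have hbernoulli : (1 : ℝ) + m * (-(b / n)) ≤ (1 + -(b / n)) ^ m := by
    refine one_add_mul_le_pow ?_ m
    have : (b : ℝ) / n ≤ 1 := div_le_one_of_le₀ (Nat.cast_le.2 hbn) hn'.le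
    linarith
  have hfactor : ((n - b : ℕ) : ℝ) = n * (1 + -(b / n)) := by
    rw [Nat.cast_sub hbn]
    field_simp
    ring
  rify
  rw [hfactor, mul_pow]
  nlinarith [pow_pos hn' m]

variable {V : Type*} [DecidableEq V]

lemma image_univ_inter_eq_singleton {κ : Type*} [Fintype κ] {f : κ → V} {B : Finset V} {j : κ}
    (hj : f j ∈ B) (hne : ∀ i, i ≠ j → f i ∉ B) : univ.image f ∩ B = {f j} := by
  ext v
  simp only [mem_inter, mem_image, mem_univ, true_and, mem_singleton]
  refine ⟨?_, fun hv => ⟨⟨j, hv.symm⟩, hv ▸ hj⟩⟩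
  rintro ⟨⟨i, rfl⟩, hi⟩
  exact congrArg f (by_contra fun hij => hne i hij hi)

variable [Fintype V]

lemma mul_card_mul_pow_le_card_image_inter_eq_singleton (κ : Type*) [Fintype κ] [DecidableEq κ]
    {T B : Finset V} (hTB : T ⊆ B) :
    Fintype.card κ * (#T * #Bᶜ ^ (Fintype.card κ - 1)) ≤
      #{f : κ → V | ∃ t ∈ T, univ.image f ∩ B = {t}} := by
  let S (j : κ) : Finset (κ → V) := Fintype.piFinset fun i => if i = j then T else Bᶜ
  have hS (j : κ) : #(S j) = #T * #Bᶜ ^ (Fintype.card κ - 1) := by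
    rw [Fintype.card_piFinset, ← mul_prod_erase univ _ (mem_univ j), if_pos rfl,
      prod_congr rfl fun i hi => by rw [if_neg (ne_of_mem_erase hi)], prod_const,
      card_erase_of_mem (mem_univ j), card_univ]
  have hdisj : ((univ : Finset κ) : Set κ).PairwiseDisjoint S := fun i _ j _ hij =>
    disjoint_left.2 fun f hi hj => by
      have hfT := Fintype.mem_piFinset.1 hi i
      have hfB := Fintype.mem_piFinset.1 hj i
      rw [if_pos rfl] at hfT
      rw [if_neg hij] at hfB
      exact mem_compl.1 hfB (hTB hfT)
  calc Fintype.card κ * (#T * #Bᶜ ^ (Fintype.card κ - 1))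
      = #(univ.biUnion S) := by
        rw [card_biUnion hdisj, sum_congr rfl fun j _ => hS j, sum_const,
          card_univ, smul_eq_mul]
    _ ≤ #{f : κ → V | ∃ t ∈ T, univ.image f ∩ B = {t}} := by
        refine card_le_card (biUnion_subset.2 fun j _ f hf => ?_)
        rw [Fintype.mem_piFinset] at hf
        have hj : f j ∈ T := by simpa using hf j
        refine mem_filter.2 ⟨mem_univ _, f j, hj, ?_⟩
        refine image_univ_inter_eq_singleton (hTB hj) fun i hij => ?_
        have hi := hf i
        rw [if_neg hij] at hi
        exact mem_compl.1 hi

-- A uniformly random function `Fin k → V` has the required property for each `i` with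
-- probability at least `k * s / (2 * n)`; some function does as well as the average.
lemma exists_card_le_mul_card_inter_eq_singleton [Nonempty V] {ι : Type*} (F : Finset ι)
    {T B : ι → Finset V} {s b k : ℕ} (hTB : ∀ i ∈ F, T i ⊆ B i) (hT : ∀ i ∈ F, s ≤ #(T i))
    (hB : ∀ i ∈ F, #(B i) ≤ b) (hk : 2 * b * k ≤ Fintype.card V) :
    ∃ Z : Finset V, #Z ≤ k ∧
      k * s * #F ≤ 2 * Fintype.card V * #{i ∈ F | ∃ t ∈ T i, Z ∩ B i = {t}} := by
  set n := Fintype.card V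
  let good (f : Fin k → V) (i : ι) : Prop := ∃ t ∈ T i, univ.image f ∩ B i = {t}
  have hcount : ∀ i ∈ F, k * s * n ^ k ≤ 2 * n * #{f : Fin k → V | good f i} := by
    intro i hi
    rcases k with _ | m
    · simp
    have hmb : n ^ m ≤ 2 * #(B i)ᶜ ^ m := by
      refine (pow_le_two_mul_sub_pow (b := b) (by nlinarith)).trans ?_
      rw [card_compl]
      gcongr
      exact hB i hi
    have hle := mul_card_mul_pow_le_card_image_inter_eq_singleton (Fin (m + 1)) (hTB i hi)
    rw [Fintype.card_fin, Nat.add_sub_cancel] at hle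
    calc (m + 1) * s * n ^ (m + 1) = n * ((m + 1) * (s * n ^ m)) := by ring
      _ ≤ n * ((m + 1) * (#(T i) * (2 * #(B i)ᶜ ^ m))) := by gcongr; exact hT i hi
      _ = 2 * n * ((m + 1) * (#(T i) * #(B i)ᶜ ^ m)) := by ring
      _ ≤ 2 * n * _ := by gcongr
  have hdouble : ∑ i ∈ F, #{f : Fin k → V | good f i} = ∑ f, #{i ∈ F | good f i} :=
    sum_card_bipartiteAbove_eq_sum_card_bipartiteBelow fun i f => good f i
  obtain ⟨f, -, hf⟩ : ∃ f ∈ (univ : Finset (Fin k → V)),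
      k * s * #F ≤ 2 * n * #{i ∈ F | good f i} := by
    refine exists_le_of_sum_le univ_nonempty ?_
    rw [sum_const, card_univ, Fintype.card_fun, Fintype.card_fin, smul_eq_mul, ← mul_sum,
      ← hdouble, mul_sum]
    calc n ^ k * (k * s * #F) = ∑ _i ∈ F, k * s * n ^ k := by
          rw [sum_const, smul_eq_mul]; ring
      _ ≤ _ := sum_le_sum hcount
  exact ⟨univ.image f, card_image_le.trans (by simp), hf⟩

end Sampling

lemma exists_dyadic_card_le_mul_card {ι : Type*} {F : Finset ι} {g : ι → ℕ} {D : ℕ}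
    (hg : ∀ i ∈ F, g i ≠ 0 ∧ g i ≤ D) :
    ∃ s, 0 < s ∧ #F ≤ (Nat.log 2 D + 1) * #{i ∈ F | s ≤ g i ∧ g i < 2 * s} := by
  have hmaps : ∀ i ∈ F, Nat.log 2 (g i) ∈ range (Nat.log 2 D + 1) := fun i hi =>
    mem_range_succ_iff.2 (Nat.log_mono_right (hg i hi).2)
  obtain ⟨j, -, hj⟩ := exists_max_image (range (Nat.log 2 D + 1))
    (fun j => #{i ∈ F | Nat.log 2 (g i) = j}) ⟨0, by simp⟩
  refine ⟨2 ^ j, by positivity, ?_⟩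
  have hclass : #{i ∈ F | Nat.log 2 (g i) = j} ≤ #{i ∈ F | 2 ^ j ≤ g i ∧ g i < 2 * 2 ^ j} := by
    refine card_le_card fun i hi => ?_
    obtain ⟨hiF, rfl⟩ := mem_filter.1 hi
    rw [mem_filter, mul_comm, ← pow_succ]
    exact ⟨hiF, Nat.pow_log_le_self 2 (hg i hiF).1, Nat.lt_pow_succ_log_self one_lt_two _⟩
  calc #F = ∑ l ∈ range (Nat.log 2 D + 1), #{i ∈ F | Nat.log 2 (g i) = l} :=
        card_eq_sum_card_fiberwise hmaps
    _ ≤ ∑ _l ∈ range (Nat.log 2 D + 1), #{i ∈ F | Nat.log 2 (g i) = j} := sum_le_sum hj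
    _ = (Nat.log 2 D + 1) * #{i ∈ F | Nat.log 2 (g i) = j} := by simp
    _ ≤ _ := Nat.mul_le_mul_left _ hclass

section UnequalPairs

variable {V : Type*} [Fintype V] [DecidableEq V] {H : SimpleGraph V} [DecidableRel H.Adj]
  {W : Finset V} {F : Finset (V × V)}

lemma exists_sdiff_degIn_add_one_eq [Nonempty V] (hFW : F ⊆ W ×ˢ W) {s k : ℕ}
    (hdeg : ∀ e ∈ F, degIn H W e.1 = degIn H W e.2)
    (hpriv : ∀ e ∈ F, s ≤ #(privateNbrs H W e.1 e.2) ∧ #(privateNbrs H W e.1 e.2) < 2 * s)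
    (hk : 8 * s * k ≤ Fintype.card V) :
    ∃ (Z : Finset V) (F' : Finset (V × V)), #Z ≤ k ∧ F' ⊆ F ∧ F' ⊆ (W \ Z) ×ˢ (W \ Z) ∧
      (∀ e ∈ F', degIn H (W \ Z) e.1 + 1 = degIn H (W \ Z) e.2) ∧
      k * s * #F ≤ 2 * Fintype.card V * #F' := by
  have hmem {e} (he : e ∈ F) : e.1 ∈ W ∧ e.2 ∈ W := mem_product.1 (hFW he)
  obtain ⟨Z, hZk, hZ⟩ := exists_card_le_mul_card_inter_eq_singleton F
    (T := fun e => privateNbrs H W e.1 e.2)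
    (B := fun e => privateNbrs H W e.1 e.2 ∪ privateNbrs H W e.2 e.1 ∪ {e.1, e.2})
    (s := s) (b := 4 * s) (k := k)
    (fun e _ => subset_union_left.trans subset_union_left) (fun e he => (hpriv e he).1)
    (fun e he => by
      have hcard := card_privateNbrs_eq (H := H) (hmem he).1 (hmem he).2 (hdeg e he)
      have hlt := (hpriv e he).2
      grw [card_union_le, card_union_le, card_le_two]
      omega)
    (by linarith)
  have hgood {e} (he : e ∈ F) (hex : ∃ t ∈ privateNbrs H W e.1 e.2,
      Z ∩ (privateNbrs H W e.1 e.2 ∪ privateNbrs H W e.2 e.1 ∪ {e.1, e.2}) = {t}) :=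
    let ⟨_, ht, hZt⟩ := hex
    degIn_sdiff_add_one_eq (hmem he).1 (hmem he).2 (hdeg e he) ht hZt
  refine ⟨Z, _, hZk, filter_subset _ _, fun e he => ?_, fun e he => ?_, hZ⟩
  · obtain ⟨heF, hex⟩ := mem_filter.1 he
    obtain ⟨h₁, h₂, -⟩ := hgood heF hex
    exact mk_mem_product (mem_sdiff.2 ⟨(hmem heF).1, h₁⟩) (mem_sdiff.2 ⟨(hmem heF).2, h₂⟩)
  · obtain ⟨heF, hex⟩ := mem_filter.1 he
    exact (hgood heF hex).2.2

variable {D m : ℕ}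

lemma exists_sdiff_degIn_add_one_eq_of_nonempty (hFW : F ⊆ W ×ˢ W) (hF : F.Nonempty)
    (hpriv : ∀ e ∈ F, degIn H W e.1 = degIn H W e.2 ∧ (privateNbrs H W e.1 e.2).Nonempty)
    (hD : ∀ x ∈ W, degIn H W x ≤ D) (hDm : D ≤ m) (hm : 8 * m ≤ Fintype.card V) :
    ∃ (Z : Finset V) (F' : Finset (V × V)), #Z ≤ m ∧ F' ⊆ F ∧ F' ⊆ (W \ Z) ×ˢ (W \ Z) ∧
      (∀ e ∈ F', degIn H (W \ Z) e.1 + 1 = degIn H (W \ Z) e.2) ∧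
      m * #F ≤ 4 * Fintype.card V * (Nat.log 2 D + 1) * #F' := by
  have hprivD {e} (he : e ∈ F) : #(privateNbrs H W e.1 e.2) ≤ D :=
    card_privateNbrs_le_degIn.trans (hD _ (mem_product.1 (hFW he)).1)
  obtain ⟨s, hs, hle⟩ := exists_dyadic_card_le_mul_card
    (g := fun e => #(privateNbrs H W e.1 e.2)) fun e he =>
      ⟨(card_pos.2 (hpriv e he).2).ne', hprivD he⟩
  set Fs := {e ∈ F | s ≤ #(privateNbrs H W e.1 e.2) ∧ #(privateNbrs H W e.1 e.2) < 2 * s}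
  have hFs : Fs ⊆ F := filter_subset _ _
  obtain ⟨e, he⟩ : Fs.Nonempty :=
    card_pos.1 (Nat.pos_of_mul_pos_left (hF.card_pos.trans_le hle))
  have : Nonempty V := ⟨e.1⟩
  have hsm : s ≤ m := (mem_filter.1 he).2.1.trans ((hprivD (hFs he)).trans hDm)
  have hsk : s * (m / s) ≤ m := Nat.mul_div_le m s
  have hmsk : m ≤ 2 * (m / s * s) := by
    have hlt := Nat.lt_mul_div_succ m hs
    have hpos := Nat.div_pos hsm hs
    nlinarith
  obtain ⟨Z, F', hZ, hF'F, hF'W, hunit, hF'⟩ := exists_sdiff_degIn_add_one_eq (hFs.trans hFW)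
    (fun e he => (hpriv e (hFs he)).1) (fun e he => (mem_filter.1 he).2) (k := m / s) (by linarith)
  refine ⟨Z, F', hZ.trans (Nat.div_le_self m s), hF'F.trans hFs, hF'W, hunit, ?_⟩
  calc m * #F ≤ 2 * (m / s * s) * ((Nat.log 2 D + 1) * #Fs) := Nat.mul_le_mul hmsk hle
    _ = 2 * (Nat.log 2 D + 1) * (m / s * s * #Fs) := by ring
    _ ≤ 2 * (Nat.log 2 D + 1) * (2 * Fintype.card V * #F') := Nat.mul_le_mul_left _ hF'
    _ = 4 * Fintype.card V * (Nat.log 2 D + 1) * #F' := by ring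

lemma exists_isBalancedHalving_of_lt_card (hD : ∀ x ∈ W, degIn H W x ≤ D) (hDm : D ≤ m)
    (hm : 8 * m ≤ Fintype.card V)
    (hDm' : 4 * Fintype.card V * (Nat.log 2 D + 1) * (2 * D + 1) ≤ m ^ 2)
    (hF : DisjointPairs F) (hFW : F ⊆ W ×ˢ W)
    (hpriv : ∀ e ∈ F, degIn H W e.1 = degIn H W e.2 ∧ (privateNbrs H W e.1 e.2).Nonempty)
    (hmF : m < #F) :
    ∃ U A B, IsBalancedHalving H U A B ∧ #W ≤ #U + (m + 1) := by
  obtain ⟨Z, F', hZ, hF'F, hF'W, hunit, hF'⟩ := exists_sdiff_degIn_add_one_eq_of_nonempty hFW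
    (card_pos.1 hmF.pos) hpriv hD hDm hm
  have hcard : 2 * D < #F' := by
    obtain ⟨e, -⟩ := card_pos.1 hmF.pos
    have : 0 < Fintype.card V := Fintype.card_pos_iff.2 ⟨e.1⟩
    refine Nat.le_of_mul_le_mul_left ?_ (by positivity :
      0 < 4 * Fintype.card V * (Nat.log 2 D + 1))
    exact hDm'.trans ((sq m).trans_le (Nat.mul_le_mul_left m hmF.le) |>.trans hF')
  obtain ⟨U, A, B, hU, hWU⟩ := exists_isBalancedHalving_of_two_mul_lt (W := W \ Z) (D := D)
    (fun x hx => (degIn_mono H sdiff_subset x).trans (hD x (mem_sdiff.1 hx).1))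
    (hF.mono hF'F) hF'W hunit hcard
  refine ⟨U, A, B, hU, ?_⟩
  have hWZ := le_card_sdiff Z W
  omega

lemma exists_isBalancedHalving (hD : ∀ x ∈ W, degIn H W x ≤ D) (hDm : D ≤ m)
    (hm : 8 * m ≤ Fintype.card V)
    (hDm' : 4 * Fintype.card V * (Nat.log 2 D + 1) * (2 * D + 1) ≤ m ^ 2) :
    ∃ U A B, IsBalancedHalving H U A B ∧ #W ≤ #U + (2 * m + D + 1) := by
  obtain ⟨F, hFW, hF, hpriv, hmax⟩ := exists_disjointPairs_maximal
    (fun x y => degIn H W x = degIn H W y ∧ (privateNbrs H W x y).Nonempty) W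
  rcases le_or_gt #F m with hFm | hmF
  · obtain ⟨U, A, B, hU, hRU⟩ := exists_isBalancedHalving_of_privateNbrs_eq_empty
      (R := W \ covered F) sdiff_subset (fun x hx => hD x (mem_sdiff.1 hx).1)
      fun x hx y hy hxy hdeg => not_nonempty_iff_eq_empty.1 fun hne =>
        hmax x hx y hy hxy ⟨hdeg, hne⟩
    refine ⟨U, A, B, hU, ?_⟩
    have hWF := le_card_sdiff (covered F) W
    rw [hF.card_covered] at hWF
    omega
  · obtain ⟨U, A, B, hU, hWU⟩ :=
      exists_isBalancedHalving_of_lt_card hD hDm hm hDm' hF hFW hpriv hmF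
    exact ⟨U, A, B, hU, by omega⟩

end UnequalPairs

section DiameterTwo

variable {V : Type*} {G H : SimpleGraph V}

lemma dist_eq_ite_of_diam_le_two [Finite V] [DecidableRel G.Adj] (hG : G.Connected)
    (hdiam : G.diam ≤ 2) {x y : V} (hxy : x ≠ y) : G.dist x y = if G.Adj x y then 1 else 2 := by
  have := hG.nonempty
  split_ifs with h
  · exact SimpleGraph.dist_eq_one_iff_adj.2 h
  · have hpos := hG.pos_dist_of_ne hxy
    have hne := mt SimpleGraph.dist_eq_one_iff_adj.1 h
    have hle := SimpleGraph.dist_le_diam (SimpleGraph.connected_iff_ediam_ne_top.1 hG)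
      (u := x) (v := y)
    omega

lemma dist_eq_ite_compl_of_diam_le_two [Finite V] [DecidableEq V] [DecidableRel G.Adj]
    (hG : G.Connected) (hdiam : G.diam ≤ 2) {x y : V} (hxy : x ≠ y) :
    G.dist x y = if Gᶜ.Adj x y then 2 else 1 := by
  simp [dist_eq_ite_of_diam_le_two hG hdiam hxy, SimpleGraph.compl_adj, hxy, ite_not]

variable [Fintype V]

lemma card_filter_lt_degree_mul_le [DecidableRel H.Adj] (D : ℕ) :
    #{x | D < H.degree x} * (D + 1) ≤ 2 * #H.edgeFinset := by
  rw [← H.sum_degrees_eq_twice_card_edges, ← smul_eq_mul]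
  exact (card_nsmul_le_sum _ _ _ fun x hx => (mem_filter.1 hx).2).trans
    (sum_le_sum_of_subset (subset_univ _))

lemma card_le_two_mul_homNumber_add [DecidableRel H.Adj] {a b D m : ℕ}
    (hdist : ∀ x y, x ≠ y → G.dist x y = if H.Adj x y then a else b) (hDm : D ≤ m)
    (hm : 8 * m ≤ Fintype.card V)
    (hDm' : 4 * Fintype.card V * (Nat.log 2 D + 1) * (2 * D + 1) ≤ m ^ 2)
    (hedge : 2 * #H.edgeFinset ≤ m * (D + 1)) :
    Fintype.card V ≤ 2 * homNumber G + (3 * m + D + 1) := by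
  classical
  have hhigh : #{x | D < H.degree x} ≤ m :=
    Nat.le_of_mul_le_mul_right ((card_filter_lt_degree_mul_le D).trans hedge) D.succ_pos
  obtain ⟨U, A, B, hU, hWU⟩ := exists_isBalancedHalving (H := H) (W := {x | ¬ D < H.degree x})
    (fun x hx => (degIn_mono H (subset_univ _) x).trans <|
      (degIn_univ H x).trans_le (not_lt.1 (mem_filter.1 hx).2)) hDm hm hDm'
  have hle := hU.card_le_two_mul_homNumber hdist
  have hsplit := card_filter_add_card_filter_not (s := univ) fun x => D < H.degree x
  rw [card_univ] at hsplit
  omega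

lemma card_edgeFinset_add_card_edgeFinset_compl [DecidableEq V] [DecidableRel G.Adj] :
    #G.edgeFinset + #Gᶜ.edgeFinset = (Fintype.card V).choose 2 := by
  rw [← card_union_of_disjoint (SimpleGraph.disjoint_edgeFinset.2 disjoint_compl_right),
    ← SimpleGraph.edgeFinset_sup, ← SimpleGraph.card_edgeFinset_top_eq_card_choose_two]
  congr! 2
  exact sup_compl_eq_top

end DiameterTwo

section Asymptotics

open Filter Asymptotics

lemma eventually_le_natFloor_mul {δ : ℝ} (hδ : 0 < δ) :
    ∀ᶠ n : ℕ in atTop, δ / 2 * n ≤ ⌊δ * n⌋₊ := by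
  filter_upwards [(tendsto_natCast_atTop_atTop.const_mul_atTop hδ).eventually_ge_atTop 2] with n hn
  linarith [Nat.sub_one_lt_floor (δ * n)]

lemma natLog_two_le_two_mul_log {n D : ℕ} (hDn : D ≤ n) :
    (Nat.log 2 D : ℝ) ≤ 2 * Real.log n := by
  have hlog : (Nat.log 2 D : ℝ) ≤ Real.log n / Real.log 2 :=
    (Nat.cast_le.2 (Nat.log_mono_right hDn)).trans (Real.natLog_le_logb n 2)
  refine hlog.trans ?_
  rw [div_le_iff₀ (Real.log_pos one_lt_two)]
  nlinarith [Real.log_two_gt_d9, Real.log_natCast_nonneg n]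

lemma mul_natLog_add_one_mul_le {c : ℝ} {n D : ℕ} (hlog : 1 ≤ Real.log n) (hDn : D ≤ n)
    (hD : D ≤ c * (n / Real.log n)) (hone : 1 ≤ c * (n / Real.log n)) :
    4 * n * (Nat.log 2 D + 1) * (2 * D + 1) ≤ 36 * c * n ^ 2 := by
  have : (0 : ℝ) < Real.log n := zero_lt_one.trans_le hlog
  have hlogD : (Nat.log 2 D + 1 : ℝ) ≤ 3 * Real.log n := by
    linarith [natLog_two_le_two_mul_log hDn]
  calc 4 * n * (Nat.log 2 D + 1) * (2 * D + 1)
      ≤ 4 * n * (3 * Real.log n) * (3 * (c * (n / Real.log n))) := by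
        gcongr
        linarith
    _ = 36 * c * n ^ 2 := by
        field_simp
        ring

-- `D` will bound the degrees and `m` the number of discarded vertices.
lemma eventually_exists_degree_bound {f : ℕ → ℝ}
    (hf : f =o[atTop] fun n => (n : ℝ) ^ 2 / Real.log n) {δ : ℝ} (hδ₀ : 0 < δ) (hδ₁ : δ ≤ 1) :
    ∀ᶠ n : ℕ in atTop, ∃ D m : ℕ, D ≤ m ∧ m ≤ δ * n ∧
      4 * n * (Nat.log 2 D + 1) * (2 * D + 1) ≤ m ^ 2 ∧ 2 * f n ≤ m * (D + 1) := by
  set c := δ ^ 2 / 144 with hc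
  have hc₀ : 0 < c := by positivity
  have hcδ : c ≤ δ := by nlinarith
  filter_upwards [eventually_le_natFloor_mul hδ₀, hf.def (by positivity : 0 < δ * c / 4),
    (Real.tendsto_log_atTop.comp tendsto_natCast_atTop_atTop).eventually_ge_atTop 1,
    (Real.isLittleO_log_id_atTop.comp_tendsto tendsto_natCast_atTop_atTop).def hc₀]
    with n hm hfn hlog hlogn
  simp only [Function.comp_apply, id_eq] at hlog hlogn
  have hpos : (0 : ℝ) < Real.log n := zero_lt_one.trans_le hlog
  rw [Real.norm_of_nonneg hpos.le, Real.norm_natCast] at hlogn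
  have hone : 1 ≤ c * (n / Real.log n) := by rwa [← mul_div_assoc, one_le_div hpos]
  have hle : c * (n / Real.log n) ≤ δ * n := by
    gcongr
    exact div_le_self n.cast_nonneg hlog
  have hD := Nat.floor_le (zero_le_one.trans hone)
  have hD' := (Nat.lt_floor_add_one (c * (n / Real.log n))).le
  have hDn : ⌊c * (n / Real.log n)⌋₊ ≤ n :=
    Nat.cast_le.1 (hD.trans (hle.trans (mul_le_of_le_one_left n.cast_nonneg hδ₁)))
  refine ⟨⌊c * (n / Real.log n)⌋₊, ⌊δ * n⌋₊, Nat.floor_mono hle, Nat.floor_le (by positivity),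
    ?_, ?_⟩
  · have hsq : 36 * c * (n : ℝ) ^ 2 ≤ (⌊δ * n⌋₊ : ℝ) ^ 2 :=
      calc 36 * c * (n : ℝ) ^ 2 = (δ / 2 * n) ^ 2 := by rw [hc]; ring
        _ ≤ _ := by gcongr
    exact_mod_cast (mul_natLog_add_one_mul_le hlog hDn hD hone).trans hsq
  · rw [Real.norm_of_nonneg (by positivity : 0 ≤ (n : ℝ) ^ 2 / Real.log n)] at hfn
    calc 2 * f n ≤ 2 * (δ * c / 4 * (n ^ 2 / Real.log n)) := by
          gcongr
          exact (le_abs_self _).trans hfn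
      _ = δ / 2 * n * (c * (n / Real.log n)) := by ring
      _ ≤ ⌊δ * n⌋₊ * (⌊c * (n / Real.log n)⌋₊ + 1) := by gcongr

lemma isLittleO_rpow_two_sub_sq_div_log {α : ℝ} (hα : 0 < α) :
    (fun n : ℕ => (n : ℝ) ^ (2 - α)) =o[atTop] fun n : ℕ => (n : ℝ) ^ 2 / Real.log n := by
  suffices h : (fun x : ℝ => x ^ (2 - α)) =o[atTop] fun x => x ^ 2 / Real.log x from
    h.comp_tendsto tendsto_natCast_atTop_atTop
  have hlog := (isLittleO_log_rpow_atTop hα).mul_isBigO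
    (isBigO_refl (fun x : ℝ => x ^ (2 - α) / Real.log x) atTop)
  refine hlog.congr' ?_ ?_
  · filter_upwards [eventually_gt_atTop 1] with x hx
    rw [mul_div_cancel₀ _ (Real.log_pos hx).ne']
  · filter_upwards [eventually_gt_atTop 0] with x hx
    rw [← mul_div_assoc, ← Real.rpow_add hx, add_sub_cancel, Real.rpow_two]

end Asymptotics

open Filter Asymptotics in
theorem stmt13_general {f : ℕ → ℝ} (hf : f =o[atTop] fun n => (n : ℝ) ^ 2 / Real.log n) {ε : ℝ}
    (hε : 0 < ε) :
    ∀ᶠ n : ℕ in atTop, ∀ (V : Type*) [Fintype V] [DecidableEq V] (G : SimpleGraph V)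
      [DecidableRel G.Adj], G.Connected → Fintype.card V = n → G.diam ≤ 2 →
        ((#G.edgeFinset : ℝ) ≤ f n ∨ (n.choose 2 : ℝ) - f n ≤ #G.edgeFinset) →
        (n : ℝ) / 2 - ε * n ≤ homNumber G := by
  filter_upwards [
    eventually_exists_degree_bound hf (δ := min (ε / 4) (1 / 8)) (by positivity)
      ((min_le_right _ _).trans (by norm_num)),
    (tendsto_natCast_atTop_atTop.const_mul_atTop hε).eventually_ge_atTop 1]
    with n ⟨D, m, hDm, hm, hDm', hfn⟩ hn V _ _ G _ hG hV hdiam hedge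
  have hmε : (m : ℝ) ≤ ε / 4 * n := hm.trans (by gcongr; exact min_le_left _ _)
  have hm8 : 8 * m ≤ Fintype.card V := by
    have : (m : ℝ) ≤ 1 / 8 * n := hm.trans (by gcongr; exact min_le_right _ _)
    rify
    rw [hV]
    linarith
  suffices h : Fintype.card V ≤ 2 * homNumber G + (3 * m + D + 1) by
    rify at h hDm
    rw [hV] at h
    linarith
  rw [← hV] at hDm'
  rcases hedge with hsparse | hdense
  · refine card_le_two_mul_homNumber_add (fun _ _ => dist_eq_ite_of_diam_le_two hG hdiam) hDm hm8
      hDm' ?_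
    rify
    linarith
  · refine card_le_two_mul_homNumber_add (fun _ _ => dist_eq_ite_compl_of_diam_le_two hG hdiam)
      hDm hm8 hDm' ?_
    have hsum := card_edgeFinset_add_card_edgeFinset_compl (G := G)
    rw [hV] at hsum
    rify at hsum ⊢
    linarith

/-- For every `α > 0` and `ε > 0` there is `N` such that every connected graph on
`n > N` vertices with diameter `2` whose number of edges is at most `n^(2−α)` or at
least `C(n,2) − n^(2−α)` satisfies `h(G) ≥ n/2 − εn`. -/
theorem stmt13 (α ε : ℝ) (hα : 0 < α) (hε : 0 < ε) :
    ∃ N : ℕ, ∀ n : ℕ, N < n →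
      ∀ (V : Type) [Fintype V] [DecidableEq V] (G : SimpleGraph V) [DecidableRel G.Adj],
        G.Connected → Fintype.card V = n → G.diam = 2 →
        ((G.edgeFinset.card : ℝ) ≤ (n : ℝ) ^ ((2 : ℝ) - α) ∨
          (n.choose 2 : ℝ) - (n : ℝ) ^ ((2 : ℝ) - α) ≤ (G.edgeFinset.card : ℝ)) →
        (n : ℝ) / 2 - ε * n ≤ homNumber G :=
  (Filter.eventually_atTop.1 (stmt13_general (isLittleO_rpow_two_sub_sq_div_log hα) hε)).imp
    fun _ hN n hn V _ _ G _ hG hV hdiam => hN n hn.le V G hG hV hdiam.le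
end
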